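/- For the random walk in an i.i.d. random environment on Z^2 and any ℓ ∈ R^2 \ {0}, the annealed probability P(A_+(ℓ)) is either 0 or 1. -/

import Mathlib

/-!
Write the level of a site `z` for its scalar product with `l`, and `A₊`, `A₋` for the events that
the level of the walk tends to `+∞`, `-∞`.

The walk which uses only sites not visited before has a future independent of its past
(`ann_regen`). Applied at record times of the level, this shows that, if the walk has a positive
probability of never going below its initial level, then on the event that the level is unbounded
above it tends to `+∞` (`Aplus_of_unbounded`). Suppose that `A₊` has positive probability, but not
probability one. Then the level is bounded above with positive probability. On this event only
finitely many sites are visited above any given level (`finite_above`), so that the level does not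
stay bounded below either, and `A₋` has positive probability (`Aminus_pos`). Hence it suffices to
show that `A₊` and `A₋` do not both have positive probability (`zero_one_of_not_both`). So far the
dimension plays no role.

In the plane, assume that both have positive probability. Run two walks, conditionally independent
given the common environment, one from the origin and one from a site `y` of very high level `L`.
Consider the event `C` that the first one escapes to `+∞` without going below level `0` and the
second one escapes to `-∞` without going above the level of `y`.

* Since `C` is, up to a small error, determined by the environment in two disjoint boxes, its
  probability is almost the product `p > 0` of the two escape probabilities (`exists_mixing`).
* In the common environment, it is unlikely that the two walks meet on `C`
  (`exists_same_Meet_le`): at a meeting point far above the origin, either the quenched probability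
  to return below level `0` is small, and then the second walk is unlikely to do so, or it is not,
  and then the first walk is unlikely to reach such a point, since it rarely makes large falls.
  Symmetrically for meeting points far below `y`.
* As long as they do not meet, the two walks behave as in independent environments
  (`same_eq_indep`).
* In independent environments, the two walks meet on `C` with probability at least `p / 2`, if `y`
  is placed at a median of the site where the first walk reaches level `L`
  (`exists_indep_Meet_ge`): by planarity, disjoint paths pass each other on the same side at both
  levels (`crossing_paths`).

Together these give `p ≤ p / 2` up to a small error, a contradiction (`not_both`).

The topological input `crossing_paths` is proved by counting the signed crossings of a ray from the
origin by the closed curve of differences `y j - x i` along the boundary of the rectangle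
`[0, m] × [0, n]`; as no difference vanishes, this number is zero by `sum_cells`.
-/

open MeasureTheory Filter Set Topology
open scoped Classical ENNReal

noncomputable section

/-- Lattice sites of `ℤ^d`. -/
abbrev Site (d : ℕ) := Fin d → ℤ

/-- The `2d` unit vectors `±e_i` of `ℤ^d`, indexed by `Fin d × Bool`
(`true` for `+e_i`, `false` for `-e_i`). -/
def stepVec (d : ℕ) (i : Fin d × Bool) : Site d :=
  if i.2 = true then Pi.single i.1 1 else -Pi.single i.1 1

/-- An element of `𝒫`: a probability measure on the set `E` of unit vectors of `ℤ^d`,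
recorded via its probability mass function on lattice vectors. -/
structure EnvDist (d : ℕ) where
  prob : Site d → ℝ
  nonneg : ∀ v, 0 ≤ prob v
  support : ∀ v, prob v ≠ 0 → ∃ i, v = stepVec d i
  total : ∑ i : Fin d × Bool, prob (stepVec d i) = 1

instance {d : ℕ} : MeasurableSpace (EnvDist d) :=
  MeasurableSpace.comap EnvDist.prob inferInstance

/-- Environments: an element of `𝒫` at every site. -/
abbrev EnvOmega (d : ℕ) := Site d → EnvDist d

/-- Path space for the walk. -/
abbrev PathSpace (d : ℕ) := ℕ → Site d

/-- Sample space for the annealed walk: environment together with path. -/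
abbrev RWSpace (d : ℕ) := EnvOmega d × PathSpace d

/-- Dot product of a lattice vector with a real vector. -/
def dotR {d : ℕ} (x : Site d) (l : Fin d → ℝ) : ℝ := ∑ i, (x i : ℝ) * l i

/-- Dot product of two lattice vectors. -/
def dotZ {d : ℕ} (x y : Site d) : ℤ := ∑ i, x i * y i

/-- Quenched probability that the walk follows the steps of `x` for its first `n` steps. -/
def pathWeight {d : ℕ} (ω : EnvOmega d) (n : ℕ) (x : ℕ → Site d) : ℝ :=
  ∏ k ∈ Finset.range n, (ω (x k)).prob (x (k + 1) - x k)

/-- `ν` is the product measure `μ^{⊗ℤ^d}`, i.e. the coordinates are i.i.d. with law `μ`. -/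
def IsIIDEnv {d : ℕ} (μ : Measure (EnvDist d)) (ν : Measure (EnvOmega d)) : Prop :=
  IsProbabilityMeasure μ ∧ IsProbabilityMeasure ν ∧
    ∀ (s : Finset (Site d)) (A : Site d → Set (EnvDist d)),
      (∀ x ∈ s, MeasurableSet (A x)) →
      ν {ω | ∀ x ∈ s, ω x ∈ A x} = ∏ x ∈ s, μ (A x)

/-- `P` is the annealed law of the RWRE started at the origin in an i.i.d. environment
with marginal `μ`: the environment marginal is the i.i.d. product, and the cylinder
probabilities are given by averaging the quenched Markov-chain probabilities. -/
def IsRWRE {d : ℕ} (μ : Measure (EnvDist d)) (P : Measure (RWSpace d)) : Prop :=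
  IsProbabilityMeasure P ∧ IsIIDEnv μ (P.map Prod.fst) ∧
    ∀ (n : ℕ) (x : ℕ → Site d) (A : Set (EnvOmega d)), MeasurableSet A →
      (P {q | q.1 ∈ A ∧ ∀ k ≤ n, q.2 k = x k}).toReal =
        (if x 0 = 0 then (1 : ℝ) else 0) * ∫ ω in A, pathWeight ω n x ∂(P.map Prod.fst)

/-- `Q` is the quenched law `ℙ_ω` of the walk in the fixed environment `ω`, started at the
origin. -/
def IsQuenchedRW {d : ℕ} (ω : EnvOmega d) (Q : Measure (PathSpace d)) : Prop :=
  IsProbabilityMeasure Q ∧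
    ∀ (n : ℕ) (x : ℕ → Site d),
      (Q {w | ∀ k ≤ n, w k = x k}).toReal =
        (if x 0 = 0 then (1 : ℝ) else 0) * pathWeight ω n x

/-- `x → y`: there is a directed path from `x` to `y` in the graph `G(ω)`. -/
def Reaches {d : ℕ} (ω : EnvOmega d) : Site d → Site d → Prop :=
  Relation.ReflTransGen (fun a b => 0 < (ω a).prob (b - a))

/-- The forward cluster `C_x`. -/
def clusterC {d : ℕ} (ω : EnvOmega d) (x : Site d) : Set (Site d) := {y | Reaches ω x y}

/-- The mutually connected cluster `M_x = C_x ∩ B_x`. -/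
def clusterM {d : ℕ} (ω : EnvOmega d) (x : Site d) : Set (Site d) :=
  {y | Reaches ω x y ∧ Reaches ω y x}

/-- The local drift `u = ∑_e γ(e) e` of an environment value `γ`. -/
def drift {d : ℕ} (γ : EnvDist d) : Fin d → ℝ :=
  fun i => ∑ k : Fin d × Bool, γ.prob (stepVec d k) * ((stepVec d k i : ℤ) : ℝ)

/-- `N_n`: the number of times before time `n` at which the walk sits on a site whose
environment equals `γ`. -/
def envCount {d : ℕ} (γ : EnvDist d) (q : RWSpace d) (n : ℕ) : ℕ :=
  Set.ncard {m : ℕ | m < n ∧ q.1 (q.2 m) = γ}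

end

section

variable {d : ℕ}

/-! ### Path space: cylinders -/

/-- The cylinder of the paths which agree with `x` up to time `n`. -/
def cyl (n : ℕ) (x : ℕ → Site d) : Set (PathSpace d) := {w | ∀ k ≤ n, w k = x k}

lemma measurableSet_cyl (n : ℕ) (x : ℕ → Site d) : MeasurableSet (cyl n x) := by
  have : cyl n x = ⋂ k, ⋂ (_ : k ≤ n), (fun w : PathSpace d => w k) ⁻¹' {x k} := by
    ext w; simp [cyl]
  rw [this]
  exact MeasurableSet.iInter fun k => MeasurableSet.iInter fun _ =>
    measurable_pi_apply k (measurableSet_singleton _)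

lemma cyl_subset {n m : ℕ} (h : n ≤ m) {x y : ℕ → Site d} (hxy : ∀ k ≤ n, x k = y k) :
    cyl m x ⊆ cyl n y := fun w hw k hk => (hw k (hk.trans h)).trans (hxy k hk)

lemma isPiSystem_cyl :
    IsPiSystem {s : Set (PathSpace d) | ∃ n x, s = cyl n x} := by
  rintro _ ⟨n, x, rfl⟩ _ ⟨m, y, rfl⟩ ⟨w, hw1, hw2⟩
  refine ⟨max n m, w, ?_⟩
  ext v
  constructor
  · rintro ⟨h1, h2⟩ k hk
    rcases le_max_iff.1 hk with h | h
    · rw [h1 k h, hw1 k h]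
    · rw [h2 k h, hw2 k h]
  · intro h
    exact ⟨fun k hk => (h k (hk.trans (le_max_left _ _))).trans (hw1 k hk),
      fun k hk => (h k (hk.trans (le_max_right _ _))).trans (hw2 k hk)⟩

/-- The path which follows `f` up to time `n` and is `0` afterwards. -/
def extPath (n : ℕ) (f : Fin (n + 1) → Site d) : ℕ → Site d :=
  fun k => if h : k < n + 1 then f ⟨k, h⟩ else 0

lemma mem_cyl_extPath {n : ℕ} {f : Fin (n + 1) → Site d} {w : PathSpace d} :
    w ∈ cyl n (extPath n f) ↔ (fun k : Fin (n + 1) => w k) = f := by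
  constructor
  · intro h
    ext1 k
    rw [h k (by omega), extPath, dif_pos k.2]
  · rintro rfl k hk
    simp [extPath, show k < n + 1 by omega]

lemma generateFrom_cyl :
    (inferInstance : MeasurableSpace (PathSpace d)) =
      MeasurableSpace.generateFrom {s : Set (PathSpace d) | ∃ n x, s = cyl n x} := by
  apply le_antisymm
  · refine iSup_le fun k => ?_
    rintro _ ⟨s, -, rfl⟩
    have : (fun w : PathSpace d => w k) ⁻¹' s =
        ⋃ (f : Fin (k + 1) → Site d) (_ : f (Fin.last k) ∈ s), cyl k (extPath k f) := by
      ext w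
      simp only [mem_preimage, mem_iUnion, mem_cyl_extPath, exists_prop]
      constructor
      · intro h; exact ⟨_, by simpa using h, rfl⟩
      · rintro ⟨f, hf, rfl⟩; simpa using hf
    rw [this]
    exact MeasurableSet.iUnion fun f => MeasurableSet.iUnion fun _ =>
      MeasurableSpace.measurableSet_generateFrom ⟨_, _, rfl⟩
  · apply MeasurableSpace.generateFrom_le
    rintro _ ⟨n, x, rfl⟩
    exact measurableSet_cyl n x

/-- Splitting an event according to the first `n` steps of the path. -/
lemma measure_eq_tsum_cyl (m : Measure (PathSpace d)) (n : ℕ) {A : Set (PathSpace d)}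
    (hA : MeasurableSet A) :
    m A = ∑' f : Fin (n + 1) → Site d, m (A ∩ cyl n (extPath n f)) := by
  rw [← measure_iUnion]
  · congr 1
    ext w
    simp only [mem_iUnion, mem_inter_iff, mem_cyl_extPath]
    simp
  · intro f g hfg
    refine Set.disjoint_left.2 ?_
    rintro w ⟨_, h1⟩ ⟨_, h2⟩
    exact hfg ((mem_cyl_extPath.1 h1).symm.trans (mem_cyl_extPath.1 h2))
  · exact fun f => hA.inter (measurableSet_cyl _ _)

lemma path_ext {m₁ m₂ : Measure (PathSpace d)} [IsFiniteMeasure m₁]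
    (h : ∀ n x, m₁ (cyl n x) = m₂ (cyl n x)) : m₁ = m₂ := by
  refine ext_of_generate_finite _ generateFrom_cyl isPiSystem_cyl ?_ ?_
  · rintro _ ⟨n, x, rfl⟩; exact h n x
  · rw [measure_eq_tsum_cyl m₁ 0 .univ, measure_eq_tsum_cyl m₂ 0 .univ]
    simp [h]

/-! ### The quenched law -/

lemma stepVec_injective : Function.Injective (stepVec d) := by
  rintro ⟨i, a⟩ ⟨j, b⟩ h
  have hi := congrFun h i
  have hj := congrFun h j
  by_cases hij : i = j
  · subst hij
    cases a <;> cases b <;> simp [stepVec] at hi ⊢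
  · cases a <;> cases b <;> simp [stepVec, hij] at hi

/-- The law on `ℤ^d` of one step. -/
noncomputable def stepMeasure (γ : EnvDist d) : Measure (Site d) :=
  ∑ i : Fin d × Bool, ENNReal.ofReal (γ.prob (stepVec d i)) • Measure.dirac (stepVec d i)

lemma stepMeasure_singleton (γ : EnvDist d) (v : Site d) :
    stepMeasure γ {v} = ENNReal.ofReal (γ.prob v) := by
  simp only [stepMeasure, Measure.coe_finsetSum, Finset.sum_apply, Measure.smul_apply,
    smul_eq_mul]
  by_cases h : ∃ i, v = stepVec d i
  · obtain ⟨i, rfl⟩ := h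
    rw [Finset.sum_eq_single i]
    · simp
    · intro j _ hj
      have : stepVec d j ≠ stepVec d i := fun h => hj (stepVec_injective h)
      simp [this]
    · simp
  · have h0 : γ.prob v = 0 := by
      by_contra h1; exact h (γ.support v h1)
    rw [h0, Finset.sum_eq_zero]
    · simp
    · intro j _
      have : stepVec d j ≠ v := fun h1 => h ⟨j, h1.symm⟩
      simp [this]

instance (γ : EnvDist d) : IsProbabilityMeasure (stepMeasure γ) := by
  constructor
  simp only [stepMeasure, Measure.coe_finsetSum, Finset.sum_apply, Measure.smul_apply,
    smul_eq_mul, measure_univ, mul_one]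
  rw [← ENNReal.ofReal_sum_of_nonneg (fun i _ => γ.nonneg _), γ.total, ENNReal.ofReal_one]

/-- The walk from `x` which makes the step `U (n, z)` if it is at `z` at time `n`. -/
def stackWalk (x : Site d) (U : ℕ × Site d → Site d) : ℕ → Site d
  | 0 => x
  | n + 1 => stackWalk x U n + U (n, stackWalk x U n)

lemma measurable_stackWalk (x : Site d) : Measurable (stackWalk (d := d) x) := by
  refine measurable_pi_iff.2 fun n => ?_
  induction n with
  | zero => exact measurable_const
  | succ n ih =>
    have h1 : Measurable (fun p : (ℕ × Site d → Site d) × Site d => p.1 (n, p.2)) :=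
      measurable_from_prod_countable_left fun z => measurable_pi_apply (n, z)
    exact ih.add (h1.comp (measurable_id.prodMk ih))

/-- The quenched law of the walk started at `x`, constructed from independent steps attached to
all times and sites, the step at `z` having the law prescribed by `ω z`. -/
noncomputable def Q (ω : EnvOmega d) (x : Site d) : Measure (PathSpace d) :=
  (Measure.infinitePi (fun p : ℕ × Site d => stepMeasure (ω p.2))).map (stackWalk x)

instance (ω : EnvOmega d) (x : Site d) : IsProbabilityMeasure (Q ω x) :=
  Measure.isProbabilityMeasure_map (measurable_stackWalk x).aemeasurable

/-- `pathWeight` as an extended nonnegative real. -/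
noncomputable def qw (ω : EnvOmega d) (n : ℕ) (y : ℕ → Site d) : ℝ≥0∞ :=
  ∏ k ∈ Finset.range n, ENNReal.ofReal ((ω (y k)).prob (y (k + 1) - y k))

lemma qw_eq_ofReal (ω : EnvOmega d) (n : ℕ) (y : ℕ → Site d) :
    qw ω n y = ENNReal.ofReal (pathWeight ω n y) := by
  rw [qw, pathWeight, ENNReal.ofReal_prod_of_nonneg fun k _ => (ω (y k)).nonneg _]

lemma Q_cyl (ω : EnvOmega d) (x : Site d) (n : ℕ) (y : ℕ → Site d) :
    Q ω x (cyl n y) = (if y 0 = x then 1 else 0) * qw ω n y := by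
  rw [Q, Measure.map_apply (measurable_stackWalk x) (measurableSet_cyl n y)]
  split_ifs with h
  · set s : Finset (ℕ × Site d) := (Finset.range n).image fun k => (k, y k) with hs
    set t : ℕ × Site d → Set (Site d) := fun p => {y (p.1 + 1) - y p.1} with ht
    have : stackWalk x ⁻¹' cyl n y = Set.pi s t := by
      ext U
      simp only [mem_preimage, cyl, mem_ofPred_eq, hs, ht, Set.mem_pi, Finset.coe_image,
        Set.mem_image, Finset.coe_range, Set.mem_Iio, forall_exists_index, and_imp,
        forall_apply_eq_imp_iff₂, Set.mem_singleton_iff]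
      constructor
      · intro hw k hk
        have h1 := hw k hk.le
        have h2 := hw (k + 1) hk
        rw [stackWalk, h1] at h2
        rw [← h2]; simp
      · intro hU k
        induction k with
        | zero => intro _; exact h.symm
        | succ k ih =>
          intro hk
          rw [stackWalk, ih (by omega), hU k (by omega)]; simp
    rw [this, Measure.infinitePi_pi _ fun _ _ => measurableSet_singleton _, hs,
      Finset.prod_image fun a _ b _ hab => congrArg Prod.fst hab, one_mul, qw]
    exact Finset.prod_congr rfl fun k _ => stepMeasure_singleton _ _
  · have : stackWalk x ⁻¹' cyl n y = ∅ := by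
      ext U
      simp only [mem_preimage, mem_empty_iff_false, iff_false]
      intro hU
      exact h (hU 0 (Nat.zero_le _)).symm
    simp [this]

lemma measurable_prob (z v : Site d) : Measurable fun ω : EnvOmega d => (ω z).prob v :=
  (measurable_pi_apply v).comp
    ((comap_measurable (EnvDist.prob (d := d))).comp (measurable_pi_apply z))

lemma measurable_qw (n : ℕ) (y : ℕ → Site d) : Measurable fun ω : EnvOmega d => qw ω n y :=
  Finset.measurable_fun_prod _ fun _ _ => (measurable_prob _ _).ennreal_ofReal

lemma measurable_Q (x : Site d) : Measurable fun ω : EnvOmega d => Q ω x := by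
  refine Measurable.measure_of_isPiSystem_of_isProbabilityMeasure generateFrom_cyl
    isPiSystem_cyl ?_
  rintro _ ⟨n, y, rfl⟩
  simp_rw [Q_cyl]
  exact (measurable_qw n y).const_mul _

/-- The quenched laws as a kernel. -/
noncomputable def QK (x : Site d) : ProbabilityTheory.Kernel (EnvOmega d) (PathSpace d) :=
  ⟨fun ω => Q ω x, measurable_Q x⟩

instance (x : Site d) : ProbabilityTheory.IsMarkovKernel (QK (d := d) x) :=
  ⟨fun ω => inferInstanceAs (IsProbabilityMeasure (Q ω x))⟩

/-- Time shift of a path. -/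
def tsh (n : ℕ) (w : PathSpace d) : PathSpace d := fun k => w (n + k)

lemma measurable_tsh (n : ℕ) : Measurable (tsh (d := d) n) :=
  measurable_pi_iff.2 fun k => measurable_pi_apply (n + k)

/-- Translation of a path. -/
def ssh (a : Site d) (w : PathSpace d) : PathSpace d := fun k => w k + a

lemma measurable_ssh (a : Site d) : Measurable (ssh (d := d) a) :=
  measurable_pi_iff.2 fun k =>
    (measurable_pi_apply k : Measurable fun w : PathSpace d => w k).add_const a

/-- The Markov property at a fixed time. -/
lemma Q_markov (ω : EnvOmega d) (x : Site d) (n : ℕ) (y : ℕ → Site d)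
    {B : Set (PathSpace d)} (hB : MeasurableSet B) :
    Q ω x (cyl n y ∩ tsh n ⁻¹' B) = Q ω x (cyl n y) * Q ω (y n) B := by
  have key : ((Q ω x).restrict (cyl n y)).map (tsh n) = Q ω x (cyl n y) • Q ω (y n) := by
    refine path_ext fun m z => ?_
    rw [Measure.map_apply (measurable_tsh n) (measurableSet_cyl m z),
      Measure.restrict_apply (measurable_tsh n (measurableSet_cyl m z)),
      Measure.smul_apply, smul_eq_mul, Q_cyl ω (y n)]
    by_cases hz : z 0 = y n
    · have : tsh n ⁻¹' cyl m z ∩ cyl n y =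
          cyl (n + m) (fun k => if k < n then y k else z (k - n)) := by
        ext w
        simp only [cyl, tsh, mem_inter_iff, mem_preimage, mem_ofPred_eq]
        constructor
        · rintro ⟨h1, h2⟩ k hk
          split_ifs with hkn
          · exact h2 k hkn.le
          · have := h1 (k - n) (by omega)
            rwa [show n + (k - n) = k by omega] at this
        · intro h
          constructor
          · intro k hk
            have := h (n + k) (by omega)
            simpa using this
          · intro k hk
            have := h k (by omega)
            rcases hk.lt_or_eq with h' | rfl
            · simpa [h'] using this
            · simpa [hz] using this
      rw [this, Q_cyl, Q_cyl, if_pos hz, one_mul, mul_assoc]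
      have h0 : (if (0:ℕ) < n then y 0 else z (0 - n)) = y 0 := by
        split_ifs with h
        · rfl
        · obtain rfl : n = 0 := by omega
          simpa using hz
      simp only [h0]
      congr 1
      rw [qw, Finset.prod_range_add, qw, qw]
      congr 1
      · refine Finset.prod_congr rfl fun k hk => ?_
        have hk := Finset.mem_range.1 hk
        by_cases h1 : k + 1 < n
        · simp [h1, hk]
        · obtain rfl : n = k + 1 := by omega
          simp [hz]
      · refine Finset.prod_congr rfl fun k hk => ?_
        have : ¬ (n + k + 1 < n) := by omega
        simp [this, show n + k + 1 - n = k + 1 by omega]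
    · have : tsh n ⁻¹' cyl m z ∩ cyl n y = ∅ := by
        ext w
        simp only [mem_inter_iff, mem_preimage, mem_empty_iff_false, iff_false, not_and]
        intro h1 h2
        exact hz ((h1 0 (Nat.zero_le _)).symm.trans (h2 n le_rfl))
      simp [this, hz]
  have := congrArg (fun m => m B) key
  simp only [Measure.map_apply (measurable_tsh n) hB, Measure.restrict_apply (measurable_tsh n hB),
    Measure.smul_apply, smul_eq_mul] at this
  rwa [inter_comm]

end

section

variable {d : ℕ}

/-! ### The product environment -/

/-- The law of the i.i.d. environment with marginal `μ`. -/
noncomputable def nu (μ : Measure (EnvDist d)) [IsProbabilityMeasure μ] : Measure (EnvOmega d) :=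
  Measure.infinitePi (fun _ : Site d => μ)

variable (μ : Measure (EnvDist d)) [IsProbabilityMeasure μ]

instance : IsProbabilityMeasure (nu μ) := by unfold nu; infer_instance

lemma IsIIDEnv.eq_nu {μ : Measure (EnvDist d)} [IsProbabilityMeasure μ]
    {ν : Measure (EnvOmega d)} (h : IsIIDEnv μ ν) : ν = nu μ := by
  refine Measure.eq_infinitePi _ fun s t ht => ?_
  rw [← h.2.2 s t fun x _ => ht x]
  rfl

lemma nu_map_shift (a : Site d) :
    (nu μ).map (fun ω : EnvOmega d => fun z => ω (z + a)) = nu μ := by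
  have hm : Measurable (fun ω : EnvOmega d => fun z => ω (z + a)) :=
    measurable_pi_iff.2 fun z => measurable_pi_apply (z + a)
  refine Measure.eq_infinitePi _ fun s t ht => ?_
  rw [Measure.map_apply hm (MeasurableSet.pi s.countable_toSet fun i _ => ht i)]
  have : (fun ω : EnvOmega d => fun z => ω (z + a)) ⁻¹' (Set.pi s t) =
      Set.pi (s.map (addRightEmbedding a)) (fun z => t (z - a)) := by
    ext ω
    simp only [mem_preimage, Set.mem_pi, Finset.coe_map, Set.mem_image, Finset.mem_coe,
      forall_exists_index, and_imp, forall_apply_eq_imp_iff₂, addRightEmbedding_apply,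
      add_sub_cancel_right]
  rw [this, nu, Measure.infinitePi_pi _ fun i _ => ht _, Finset.prod_map]
  simp

/-- Functions of the environment which depend on disjoint sets of sites are independent. -/
lemma lintegral_mul_of_dependsOn {f g : EnvOmega d → ℝ≥0∞} (hf : Measurable f)
    (hg : Measurable g) {S T : Set (Site d)} (hfS : DependsOn f S) (hgT : DependsOn g T)
    (hST : Disjoint S T) :
    ∫⁻ ω, f ω * g ω ∂(nu μ) = (∫⁻ ω, f ω ∂(nu μ)) * ∫⁻ ω, g ω ∂(nu μ) := by
  obtain ⟨c⟩ : Nonempty (EnvDist d) := MeasureTheory.nonempty_of_isProbabilityMeasure μ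
  let m : Site d → MeasurableSpace (EnvOmega d) :=
    fun z => MeasurableSpace.comap (fun ω => ω z) inferInstance
  have hle : ∀ z, m z ≤ (inferInstance : MeasurableSpace (EnvOmega d)) := fun z => (measurable_pi_apply z).comap_le
  have hind : ProbabilityTheory.iIndep m (nu μ) := by
    have := ProbabilityTheory.iIndepFun_infinitePi (P := fun _ : Site d => μ)
      (X := fun _ γ => γ) (fun _ => measurable_id)
    exact this.iIndep
  have key : ∀ (R : Set (Site d)) (h : EnvOmega d → ℝ≥0∞), Measurable h → DependsOn h R →
      Measurable[⨆ z ∈ R, m z] h := by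
    intro R h hm hR
    have h1 : h = h ∘ fun ω z => if z ∈ R then ω z else c := by
      ext ω
      exact hR fun z hz => by simp [hz]
    rw [h1]
    refine hm.comp ?_
    refine (@measurable_pi_iff _ _ _ (⨆ z ∈ R, m z) _ _).2 fun z => ?_
    by_cases hz : z ∈ R
    · simp only [hz, if_true]
      exact (comap_measurable (fun ω : EnvOmega d => ω z)).mono
        (le_iSup₂_of_le z hz le_rfl) le_rfl
    · simp only [hz, if_false]
      exact measurable_const
  exact ProbabilityTheory.lintegral_mul_eq_lintegral_mul_lintegral_of_independent_measurableSpace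
    (iSup₂_le fun z _ => hle z) (iSup₂_le fun z _ => hle z)
    (ProbabilityTheory.indep_iSup_of_disjoint hle hind hST) (key S f hf hfS) (key T g hg hgT)

/-! ### Dependence of quenched probabilities on the environment -/

lemma qw_congr (n : ℕ) (y : ℕ → Site d) {S : Set (Site d)} (h : ∀ k < n, y k ∈ S)
    {ω ω' : EnvOmega d} (hω : ∀ z ∈ S, ω z = ω' z) : qw ω n y = qw ω' n y := by
  exact Finset.prod_congr rfl fun k hk => by rw [hω _ (h k (Finset.mem_range.1 hk))]

/-- An event which is determined by the first `n` steps, on which the walk stays in `S` before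
time `n`, has a quenched probability which depends only on the environment in `S`. -/
lemma dependsOn_Q_finite (x : Site d) (n : ℕ) {B : Set (PathSpace d)} (hB : MeasurableSet B)
    (hdet : ∀ w w' : PathSpace d, (∀ k ≤ n, w k = w' k) → w ∈ B → w' ∈ B) {S : Set (Site d)}
    (hS : ∀ w ∈ B, ∀ k < n, w k ∈ S) :
    DependsOn (fun ω : EnvOmega d => Q ω x B) S := by
  intro ω ω' hω
  simp only
  rw [measure_eq_tsum_cyl (Q ω x) n hB, measure_eq_tsum_cyl (Q ω' x) n hB]
  refine tsum_congr fun f => ?_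
  by_cases hf : extPath n f ∈ B
  · have : B ∩ cyl n (extPath n f) = cyl n (extPath n f) :=
      inter_eq_right.2 fun w hw => hdet _ _ (fun k hk => (hw k hk).symm) hf
    rw [this, Q_cyl, Q_cyl, qw_congr n (extPath n f) (hS _ hf) hω]
  · have : B ∩ cyl n (extPath n f) = ∅ := by
      ext w
      simp only [mem_inter_iff, mem_empty_iff_false, iff_false, not_and]
      exact fun hw hc => hf (hdet _ _ hc hw)
    rw [this, measure_empty, measure_empty]

lemma measurableSet_stay (S : Set (Site d)) : MeasurableSet {w : PathSpace d | ∀ n, w n ∈ S} := by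
  have : {w : PathSpace d | ∀ n, w n ∈ S} = ⋂ n, (fun w : PathSpace d => w n) ⁻¹' S := by
    ext; simp
  rw [this]
  exact MeasurableSet.iInter fun n => measurable_pi_apply n MeasurableSet.of_discrete

lemma measurableSet_stay_before (S : Set (Site d)) (m : ℕ) :
    MeasurableSet {w : PathSpace d | ∀ n < m, w n ∈ S} := by
  have : {w : PathSpace d | ∀ n < m, w n ∈ S} =
      ⋂ n, ⋂ (_ : n < m), (fun w : PathSpace d => w n) ⁻¹' S := by
    ext; simp
  rw [this]
  exact MeasurableSet.iInter fun n => MeasurableSet.iInter fun _ =>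
    measurable_pi_apply n MeasurableSet.of_discrete

/-- The infinite-time analogue of `dependsOn_Q_finite`. -/
lemma dependsOn_Q (x : Site d) {B : Set (PathSpace d)} (hB : MeasurableSet B)
    {S : Set (Site d)} (hS : ∀ w ∈ B, ∀ n, w n ∈ S) :
    DependsOn (fun ω : EnvOmega d => Q ω x B) S := by
  intro ω ω' hω
  set St : Set (PathSpace d) := {w | ∀ n, w n ∈ S} with hSt
  have hstm : MeasurableSet St := measurableSet_stay S
  have key : (Q ω x).restrict St = (Q ω' x).restrict St := by
    refine path_ext fun n y => ?_
    rw [Measure.restrict_apply (measurableSet_cyl n y), Measure.restrict_apply (measurableSet_cyl n y)]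
    let D : ℕ → Set (PathSpace d) := fun m => cyl n y ∩ {w | ∀ k < n + m, w k ∈ S}
    have hDm : ∀ m, MeasurableSet (D m) := fun m =>
      (measurableSet_cyl n y).inter (measurableSet_stay_before S _)
    have hD : cyl n y ∩ St = ⋂ m, D m := by
      ext w
      simp only [hSt, D, mem_inter_iff, mem_iInter, mem_ofPred_eq]
      constructor
      · rintro ⟨h1, h2⟩ m; exact ⟨h1, fun k _ => h2 k⟩
      · intro h
        exact ⟨(h 0).1, fun k => (h (k + 1)).2 k (by omega)⟩
    have hanti : Antitone D := by
      intro a b hab w hw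
      exact ⟨hw.1, fun k hk => hw.2 k (by omega)⟩
    rw [hD, hanti.measure_iInter (fun m => (hDm m).nullMeasurableSet) ⟨0, measure_ne_top _ _⟩,
      hanti.measure_iInter (fun m => (hDm m).nullMeasurableSet) ⟨0, measure_ne_top _ _⟩]
    congr 1
    ext1 m
    refine dependsOn_Q_finite x (n + m) (hDm m) ?_ (fun w hw => hw.2) hω
    intro w w' hww hw
    exact ⟨fun k hk => (hww k (by omega)).symm.trans (hw.1 k hk),
      fun k hk => hww k hk.le ▸ hw.2 k hk⟩
  have hsub : B ∩ St = B := inter_eq_left.2 hS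
  have := congrArg (fun m => m B) key
  simpa only [Measure.restrict_apply hB, hsub] using this

/-! ### The annealed law -/

/-- The annealed law of the walk started at `x`. -/
noncomputable def ann (x : Site d) : Measure (PathSpace d) :=
  (nu μ).bind (fun ω => Q ω x)

lemma ann_apply (x : Site d) {B : Set (PathSpace d)} (hB : MeasurableSet B) :
    ann μ x B = ∫⁻ ω, Q ω x B ∂(nu μ) :=
  Measure.bind_apply hB (measurable_Q x).aemeasurable

instance (x : Site d) : IsProbabilityMeasure (ann μ x) := by
  constructor
  rw [ann_apply μ x .univ]
  simp

lemma measurable_Q_apply (x : Site d) {B : Set (PathSpace d)} (hB : MeasurableSet B) :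
    Measurable fun ω : EnvOmega d => Q ω x B :=
  (Measure.measurable_coe hB).comp (measurable_Q x)

/-- Translation covariance of the quenched laws. -/
lemma Q_shift (ω : EnvOmega d) (x a : Site d) {B : Set (PathSpace d)} (hB : MeasurableSet B) :
    Q ω (x + a) B = Q (fun z => ω (z + a)) x (ssh a ⁻¹' B) := by
  have : Q ω (x + a) = (Q (fun z => ω (z + a)) x).map (ssh a) := by
    refine path_ext fun n y => ?_
    rw [Measure.map_apply (measurable_ssh a) (measurableSet_cyl n y)]
    have : ssh a ⁻¹' cyl n y = cyl n (fun k => y k - a) := by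
      ext w
      simp only [cyl, ssh, mem_preimage, mem_ofPred_eq, eq_sub_iff_add_eq]
    rw [this, Q_cyl, Q_cyl]
    simp only [qw, sub_add_cancel, sub_sub_sub_cancel_right, sub_eq_iff_eq_add]
  rw [this, Measure.map_apply (measurable_ssh a) hB]

lemma ann_shift (x a : Site d) {B : Set (PathSpace d)} (hB : MeasurableSet B) :
    ann μ (x + a) B = ann μ x (ssh a ⁻¹' B) := by
  rw [ann_apply μ _ hB, ann_apply μ _ (measurable_ssh a hB)]
  conv_rhs => rw [← nu_map_shift μ a]
  rw [lintegral_map (measurable_Q_apply x (measurable_ssh a hB))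
    (measurable_pi_iff.2 fun z => measurable_pi_apply (z + a))]
  exact lintegral_congr fun ω => Q_shift ω x a hB

lemma ann_shift_zero (a : Site d) {B : Set (PathSpace d)} (hB : MeasurableSet B) :
    ann μ a B = ann μ 0 (ssh a ⁻¹' B) := by
  rw [← ann_shift μ 0 a hB, zero_add]

/-- The path seen from its position at time `n`. -/
def rel (n : ℕ) (w : PathSpace d) : PathSpace d := fun k => w (n + k) - w n

lemma measurable_rel (n : ℕ) : Measurable (rel (d := d) n) :=
  measurable_pi_iff.2 fun k =>
    (measurable_pi_apply (n + k) : Measurable fun w : PathSpace d => w (n + k)).sub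
      (measurable_pi_apply n)

lemma cyl_inter_rel (n : ℕ) (y : ℕ → Site d) (B : Set (PathSpace d)) :
    cyl n y ∩ rel n ⁻¹' B = cyl n y ∩ tsh n ⁻¹' (ssh (-y n) ⁻¹' B) := by
  ext w
  simp only [mem_inter_iff, mem_preimage, and_congr_right_iff]
  intro hw
  have : rel n w = ssh (-y n) (tsh n w) := by
    ext1 k
    simp [rel, ssh, tsh, hw n le_rfl, sub_eq_add_neg]
  rw [this]

lemma ann_cyl_rel (n : ℕ) (y : ℕ → Site d) {B : Set (PathSpace d)} (hB : MeasurableSet B) :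
    ann μ 0 (cyl n y ∩ rel n ⁻¹' B) =
      ∫⁻ ω, Q ω 0 (cyl n y) * Q ω (y n) (ssh (-y n) ⁻¹' B) ∂(nu μ) := by
  have hB' := measurable_ssh (-y n) hB
  rw [cyl_inter_rel, ann_apply μ 0 ((measurableSet_cyl n y).inter (measurable_tsh n hB'))]
  exact lintegral_congr fun ω => Q_markov ω 0 n y hB'

lemma ann_shift_neg (a : Site d) {B : Set (PathSpace d)} (hB : MeasurableSet B) :
    ∫⁻ ω, Q ω a (ssh (-a) ⁻¹' B) ∂(nu μ) = ann μ 0 B := by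
  rw [← ann_apply μ a (measurable_ssh (-a) hB), ann_shift_zero μ a (measurable_ssh (-a) hB)]
  congr 1
  ext w
  have : ssh (-a) (ssh a w) = w := by ext1 k; simp [ssh]
  simp [this]

/-- Regeneration: if after time `n` the walk is required to use only sites which were not visited
before time `n`, then its annealed law after time `n` does not depend on the past. -/
lemma ann_regen (n : ℕ) (y : ℕ → Site d) {B : Set (PathSpace d)} (hB : MeasurableSet B)
    {S : Set (Site d)} (hBS : ∀ w ∈ B, ∀ k, w k ∈ S) (hy : ∀ k < n, y k - y n ∉ S) :
    ann μ 0 (cyl n y ∩ rel n ⁻¹' B) = ann μ 0 (cyl n y) * ann μ 0 B := by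
  have hB' := measurable_ssh (-y n) hB
  rw [ann_cyl_rel μ n y hB, ann_apply μ 0 (measurableSet_cyl n y), ← ann_shift_neg μ (y n) hB]
  refine lintegral_mul_of_dependsOn μ (measurable_Q_apply _ (measurableSet_cyl n y))
    (measurable_Q_apply _ hB') (S := {z | z - y n ∉ S}) (T := {z | z - y n ∈ S}) ?_ ?_ ?_
  · intro ω ω' hω
    simp only [Q_cyl]
    rw [qw_congr n y (S := {z | z - y n ∉ S}) hy hω]
  · refine dependsOn_Q _ hB' fun w hw k => ?_
    have := hBS _ hw k
    simpa [ssh, sub_eq_add_neg] using this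
  · exact Set.disjoint_left.2 fun z h1 h2 => h1 h2

/-- A first step onto a site not visited before. -/
lemma ann_new_step (n : ℕ) (y : ℕ → Site d) (e : Site d) (hy : ∀ k < n, y k ≠ y n) :
    ann μ 0 (cyl n y ∩ rel n ⁻¹' {w | w 1 = e}) =
      ann μ 0 (cyl n y) * ann μ 0 {w | w 1 = e} := by
  have hB : MeasurableSet {w : PathSpace d | w 1 = e} :=
    measurable_pi_apply (X := fun _ => Site d) 1 (measurableSet_singleton e)
  have hB' := measurable_ssh (-y n) hB
  rw [ann_cyl_rel μ n y hB, ann_apply μ 0 (measurableSet_cyl n y), ← ann_shift_neg μ (y n) hB]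
  refine lintegral_mul_of_dependsOn μ (measurable_Q_apply _ (measurableSet_cyl n y))
    (measurable_Q_apply _ hB') (S := {y n}ᶜ) (T := {y n}) ?_ ?_ ?_
  · intro ω ω' hω
    simp only [Q_cyl]
    rw [qw_congr n y (S := {y n}ᶜ) hy hω]
  · intro ω ω' hω
    have h1 : ∀ ω : EnvOmega d, Q ω (y n) (ssh (-y n) ⁻¹' {w | w 1 = e}) =
        qw ω 1 (fun k => if k = 0 then y n else e + y n) := by
      intro ω
      have h0 : ∀ᵐ w ∂(Q ω (y n)), w 0 = y n := by
        have h2 : Q ω (y n) (cyl 0 fun _ => y n) = 1 := by simp [Q_cyl, qw]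
        have h3 : (cyl 0 fun _ => y n) ∈ ae (Q ω (y n)) :=
          (prob_compl_eq_zero_iff (measurableSet_cyl _ _)).2 h2
        filter_upwards [h3] with w hw using hw 0 le_rfl
      have h4 : Q ω (y n) (ssh (-y n) ⁻¹' {w | w 1 = e}) =
          Q ω (y n) (cyl 1 (fun k => if k = 0 then y n else e + y n)) := by
        refine measure_congr ?_
        filter_upwards [h0] with w hw
        apply propext
        show (ssh (-y n) w 1 = e) ↔ _
        constructor
        · intro h k hk
          interval_cases k
          · simp [hw]
          · simp [← h, ssh]
        · intro h
          have := h 1 le_rfl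
          simp [ssh, this]
      rw [h4, Q_cyl]; simp
    simp only [h1]
    exact qw_congr 1 _ (S := {y n}) (fun k hk => by simp [show k = 0 by omega]) hω
  · exact disjoint_compl_left

/-- An event which is negligible for the walk at time `0` is negligible at all times, as seen
from the walk. -/
lemma ann_rel_null {B : Set (PathSpace d)} (hB : MeasurableSet B) (h : ann μ 0 B = 0) :
    ∀ᵐ w ∂(ann μ 0), ∀ n, rel n w ∉ B := by
  refine ae_all_iff.2 fun n => ?_
  have hm := measurable_rel n hB
  show ann μ 0 {w | ¬ (rel n w ∉ B)} = 0
  have : {w : PathSpace d | ¬ (rel n w ∉ B)} = rel n ⁻¹' B := by ext; simp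
  rw [this, measure_eq_tsum_cyl _ n hm, ENNReal.tsum_eq_zero]
  intro f
  rw [inter_comm, ann_cyl_rel μ n _ hB]
  have h1 := ann_shift_neg μ (extPath n f n) hB
  rw [h, lintegral_eq_zero_iff (measurable_Q_apply _ (measurable_ssh _ hB))] at h1
  refine (lintegral_congr_ae (g := fun _ => 0) ?_).trans lintegral_zero
  filter_upwards [h1] with ω hω
  simp only [Pi.zero_apply] at hω
  rw [hω, mul_zero]

/-- The path marginal of an annealed law in the sense of `IsRWRE`. -/
lemma IsRWRE.map_snd {μ : Measure (EnvDist d)} [IsProbabilityMeasure μ]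
    {P : Measure (RWSpace d)} (hP : IsRWRE μ P) : P.map Prod.snd = ann μ 0 := by
  have := hP.1
  refine path_ext fun n x => ?_
  have h := hP.2.2 n x univ .univ
  rw [Measure.map_apply measurable_snd (measurableSet_cyl n x), ann_apply μ 0 (measurableSet_cyl n x)]
  have e1 : {q : RWSpace d | q.1 ∈ univ ∧ ∀ k ≤ n, q.2 k = x k} = Prod.snd ⁻¹' cyl n x := by
    ext q; simp [cyl]
  rw [e1, Measure.restrict_univ, hP.2.1.eq_nu] at h
  have hpw : ∀ ω : EnvOmega d, 0 ≤ pathWeight ω n x := fun ω =>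
    Finset.prod_nonneg fun k _ => (ω (x k)).nonneg _
  have hmeas : Measurable fun ω : EnvOmega d => pathWeight ω n x :=
    Finset.measurable_fun_prod _ fun _ _ => measurable_prob _ _
  rw [integral_eq_lintegral_of_nonneg_ae (Eventually.of_forall hpw) hmeas.aestronglyMeasurable] at h
  simp_rw [Q_cyl, qw_eq_ofReal]
  rw [lintegral_const_mul _ hmeas.ennreal_ofReal]
  have hle : ∫⁻ ω, ENNReal.ofReal (pathWeight ω n x) ∂(nu μ) ≤ 1 := by
    calc _ = ∫⁻ ω, Q ω (x 0) (cyl n x) ∂(nu μ) := by simp [Q_cyl, qw_eq_ofReal]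
      _ ≤ ∫⁻ _, 1 ∂(nu μ) := lintegral_mono fun ω => prob_le_one
      _ = 1 := by simp
  rw [← ENNReal.toReal_eq_toReal_iff' (measure_ne_top _ _), h, ENNReal.toReal_mul]
  · split_ifs <;> simp
  · exact ENNReal.mul_ne_top (by split_ifs <;> simp) (ne_top_of_le_ne_top ENNReal.one_ne_top hle)

end

section

variable {d : ℕ}

/-! ### Events occurring at infinitely many attempts -/

/-- The event `A` is determined by the first `n` steps of the path. -/
def DetBy (n : ℕ) (A : Set (PathSpace d)) : Prop :=
  ∀ w w' : PathSpace d, (∀ k ≤ n, w k = w' k) → w ∈ A → w' ∈ A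

lemma DetBy.measurableSet_piLE {n : ℕ} {A : Set (PathSpace d)} (h : DetBy n A) :
    MeasurableSet[Filtration.piLE (X := fun _ : ℕ => Site d) n] A := by
  rw [Filtration.piLE_eq_comap_frestrictLe]
  refine ⟨Preorder.frestrictLe n '' A, MeasurableSet.of_discrete, ?_⟩
  ext w
  constructor
  · rintro ⟨v, hv, hvw⟩
    refine h v w (fun k hk => ?_) hv
    exact congrFun hvw ⟨k, Finset.mem_Iic.2 hk⟩
  · exact fun hw => ⟨w, hw, rfl⟩

lemma DetBy.measurableSet {n : ℕ} {A : Set (PathSpace d)} (h : DetBy n A) : MeasurableSet A :=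
  Filtration.piLE.le n _ h.measurableSet_piLE

lemma detBy_of_piLE {n : ℕ} {A : Set (PathSpace d)}
    (h : MeasurableSet[Filtration.piLE (X := fun _ : ℕ => Site d) n] A) : DetBy n A := by
  rw [Filtration.piLE_eq_comap_frestrictLe] at h
  obtain ⟨B, -, rfl⟩ := h
  intro w w' hww hw
  have : Preorder.frestrictLe (π := fun _ : ℕ => Site d) n w' = Preorder.frestrictLe n w := by
    ext1 k
    exact (hww k (Finset.mem_Iic.1 k.2)).symm
  show Preorder.frestrictLe n w' ∈ B
  rw [this]; exact hw

lemma DetBy.inter_cyl {n : ℕ} {A : Set (PathSpace d)} (h : DetBy n A) {y : ℕ → Site d}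
    (hy : y ∈ A) : A ∩ cyl n y = cyl n y :=
  inter_eq_right.2 fun w hw => h y w (fun k hk => (hw k hk).symm) hy

lemma DetBy.inter_cyl_eq_empty {n : ℕ} {A : Set (PathSpace d)} (h : DetBy n A) {y : ℕ → Site d}
    (hy : y ∉ A) : A ∩ cyl n y = ∅ := by
  ext w
  simp only [mem_inter_iff, mem_empty_iff_false, iff_false, not_and]
  exact fun hw hc => hy (h w y hc hw)

/-- A conditional form of the second Borel-Cantelli lemma: if at each time `n` at which the event
`H n` of the past occurs the conditional probability of `G n` given the past is at least `c > 0`,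
then almost surely `H n ∩ G n` occurs infinitely often as soon as `H n` does. -/
lemma infinitely_many_attempts (m : Measure (PathSpace d)) [IsProbabilityMeasure m]
    (H G : ℕ → Set (PathSpace d)) (hH : ∀ n, DetBy n (H n)) (hG : ∀ n, MeasurableSet (G n))
    (c : ℝ≥0∞) (hc : c ≠ 0)
    (h : ∀ n, ∀ y ∈ H n, c * m (cyl n y) ≤ m (cyl n y ∩ G n)) :
    ∀ᵐ w ∂m, (∃ᶠ n in atTop, w ∈ H n) → ∀ N, ∃ n ≥ N, w ∈ H n ∧ w ∈ G n := by
  -- the constant can be taken finite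
  wlog hc1 : c ≤ 1 generalizing c
  · exact this 1 one_ne_zero (fun n y hy => (mul_le_mul_left (not_le.1 hc1).le _).trans (h n y hy)) le_rfl
  have hctop : c ≠ ∞ := ne_top_of_le_ne_top ENNReal.one_ne_top hc1
  have hset : ∀ n, ∀ s, DetBy n s → c * m (s ∩ H n) ≤ m (s ∩ (H n ∩ G n)) := by
    intro n s hs
    have hsm := hs.measurableSet
    have hHm := (hH n).measurableSet
    rw [measure_eq_tsum_cyl m n (hsm.inter hHm),
      measure_eq_tsum_cyl m n (hsm.inter (hHm.inter (hG n))), ← ENNReal.tsum_mul_left]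
    refine ENNReal.tsum_le_tsum fun f => ?_
    have hsH : DetBy n (s ∩ H n) := fun w w' hww hw => ⟨hs w w' hww hw.1, hH n w w' hww hw.2⟩
    rw [show s ∩ (H n ∩ G n) ∩ cyl n (extPath n f) = (s ∩ H n ∩ cyl n (extPath n f)) ∩ G n by
      ext; simp only [mem_inter_iff]; tauto]
    by_cases hf : extPath n f ∈ s ∩ H n
    · rw [hsH.inter_cyl hf]
      exact h n _ hf.2
    · rw [hsH.inter_cyl_eq_empty hf]; simp
  have hstep : ∀ N, ∀ᵐ w ∂m, (∃ᶠ n in atTop, w ∈ H n) → ∃ n ≥ N, w ∈ H n ∧ w ∈ G n := by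
    intro N
    let ℱ := Filtration.piLE (X := fun _ : ℕ => Site d)
    set E : Set (PathSpace d) := ⋃ n, ⋃ (_ : N ≤ n), H n ∩ G n with hE
    have hEm : MeasurableSet E := MeasurableSet.iUnion fun n => MeasurableSet.iUnion fun _ =>
      (hH n).measurableSet.inter (hG n)
    set f : PathSpace d → ℝ := E.indicator 1 with hf
    have hfi : Integrable f m := (integrable_const (1 : ℝ)).indicator hEm
    have hsup : (inferInstance : MeasurableSpace (PathSpace d)) ≤ ⨆ n, ℱ n := by
      rw [generateFrom_cyl]
      refine MeasurableSpace.generateFrom_le ?_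
      rintro _ ⟨n, x, rfl⟩
      refine (le_iSup ℱ n) _ (DetBy.measurableSet_piLE (n := n) ?_)
      exact fun w w' hww hw k hk => (hww k hk).symm.trans (hw k hk)
    have hfs : StronglyMeasurable[⨆ n, ℱ n] f :=
      (stronglyMeasurable_const (b := (1 : ℝ))).indicator (hsup E hEm)
    have hge : ∀ n ≥ N, ∀ᵐ w ∂m, w ∈ H n → c.toReal ≤ (m[f | ℱ n]) w := by
      intro n hn
      have hHi : Integrable ((H n).indicator fun _ => c.toReal) m :=
        (integrable_const _).indicator (hH n).measurableSet
      have hsm : StronglyMeasurable[ℱ n] (m[f | ℱ n] - (H n).indicator fun _ => c.toReal) :=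
        stronglyMeasurable_condExp.sub
          (stronglyMeasurable_const.indicator (hH n).measurableSet_piLE)
      have h0 : 0 ≤ᵐ[m.trim (ℱ.le n)] (m[f | ℱ n] - (H n).indicator fun _ => c.toReal) := by
        refine ae_nonneg_of_forall_setIntegral_nonneg
          ((integrable_condExp.sub hHi).trim (ℱ.le n) hsm) fun s hs _ => ?_
        rw [← setIntegral_trim (ℱ.le n) hsm hs]
        simp only [Pi.sub_apply]
        rw [integral_sub integrable_condExp.integrableOn hHi.integrableOn,
          setIntegral_condExp (ℱ.le n) hfi hs, setIntegral_indicator (hH n).measurableSet,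
          setIntegral_indicator hEm, sub_nonneg]
        simp only [Pi.one_apply, setIntegral_const, smul_eq_mul, mul_one, Measure.real]
        rw [mul_comm, ← ENNReal.toReal_mul]
        refine ENNReal.toReal_mono (measure_ne_top _ _)
          ((hset n s (detBy_of_piLE hs)).trans (measure_mono ?_))
        rintro w ⟨h1, h2⟩
        exact ⟨h1, mem_iUnion₂.2 ⟨n, hn, h2⟩⟩
      filter_upwards [ae_le_of_ae_le_trim h0] with w hw hwH
      simpa [hwH] using hw
    filter_upwards [hfi.tendsto_ae_condExp (ℱ := ℱ) hfs, ae_all_iff.2 fun n =>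
      ae_all_iff.2 fun hn : n ≥ N => hge n hn] with w hw1 hw2 hfreq
    by_contra hcon
    have hwE : w ∉ E := by
      intro hwE
      obtain ⟨n, hn, h1⟩ := mem_iUnion₂.1 hwE
      exact hcon ⟨n, hn, h1⟩
    have hf0 : f w = 0 := indicator_of_notMem hwE _
    rw [hf0] at hw1
    have hcpos : 0 < c.toReal := ENNReal.toReal_pos hc hctop
    have h3 := hw1.eventually (gt_mem_nhds hcpos)
    obtain ⟨n, h4, h5, h6⟩ := (hfreq.and_eventually (h3.and (eventually_ge_atTop N))).exists
    exact absurd (hw2 n h6 h4) (not_le.2 h5)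
  filter_upwards [ae_all_iff.2 hstep] with w hw hfreq N
  exact hw N hfreq

end

section

variable {d : ℕ}

/-! ### Levels of the path in the direction `l` -/

lemma dotR_add (x y : Site d) (l : Fin d → ℝ) : dotR (x + y) l = dotR x l + dotR y l := by
  simp [dotR, add_mul, Finset.sum_add_distrib]

lemma dotR_sub (x y : Site d) (l : Fin d → ℝ) : dotR (x - y) l = dotR x l - dotR y l := by
  simp [dotR, sub_mul, Finset.sum_sub_distrib]

lemma dotR_zero (l : Fin d → ℝ) : dotR 0 l = 0 := by simp [dotR]

lemma dotR_neg (x : Site d) (l : Fin d → ℝ) : dotR x (-l) = -dotR x l := by simp [dotR]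

lemma measurable_lev (n : ℕ) (l : Fin d → ℝ) :
    Measurable fun w : PathSpace d => dotR (w n) l :=
  (measurable_of_countable fun x : Site d => dotR x l).comp (measurable_pi_apply n)

/-- The event `A_+(l)` that the level of the path tends to `+∞`. -/
def Aplus (l : Fin d → ℝ) : Set (PathSpace d) :=
  {w | Tendsto (fun n => dotR (w n) l) atTop atTop}

/-- The event that the path never visits the half-space of negative levels. -/
def Splus (l : Fin d → ℝ) : Set (PathSpace d) := {w | ∀ n, 0 ≤ dotR (w n) l}

/-- The event that the level of the path is bounded above. -/
def Bdd (l : Fin d → ℝ) : Set (PathSpace d) := {w | BddAbove (range fun n => dotR (w n) l)}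

lemma measurableSet_Aplus (l : Fin d → ℝ) : MeasurableSet (Aplus l) :=
  measurableSet_tendsto atTop fun n => measurable_lev n l

lemma measurableSet_Splus (l : Fin d → ℝ) : MeasurableSet (Splus l) := by
  have : Splus l = ⋂ n, {w : PathSpace d | 0 ≤ dotR (w n) l} := by ext; simp [Splus]
  rw [this]
  exact MeasurableSet.iInter fun n => measurableSet_le measurable_const (measurable_lev n l)

lemma measurableSet_Bdd (l : Fin d → ℝ) : MeasurableSet (Bdd l) :=
  measurableSet_bddAbove_range fun n => measurable_lev n l

lemma dotR_rel (n k : ℕ) (w : PathSpace d) (l : Fin d → ℝ) :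
    dotR (rel n w k) l = dotR (w (n + k)) l - dotR (w n) l := dotR_sub _ _ _

lemma mem_Splus_rel {n : ℕ} {w : PathSpace d} {l : Fin d → ℝ} :
    rel n w ∈ Splus l ↔ ∀ k ≥ n, dotR (w n) l ≤ dotR (w k) l := by
  simp only [Splus, mem_ofPred_eq, dotR_rel, sub_nonneg]
  constructor
  · intro h k hk
    obtain ⟨j, rfl⟩ := Nat.exists_eq_add_of_le hk
    exact h j
  · exact fun h k => h _ (by omega)

lemma not_mem_Bdd_of_mem_Aplus {w : PathSpace d} {l : Fin d → ℝ} (h : w ∈ Aplus l) : w ∉ Bdd l :=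
  not_bddAbove_of_tendsto_atTop h

lemma mem_Bdd_of_rel {n : ℕ} {w : PathSpace d} {l : Fin d → ℝ} (h : rel n w ∈ Bdd l) :
    w ∈ Bdd l := by
  obtain ⟨M, hM⟩ := h
  have h1 : BddAbove ((fun k => dotR (w k) l) '' (Iic n)) := ((finite_Iic n).image _).bddAbove
  obtain ⟨M', hM'⟩ := h1
  refine ⟨max M' (M + dotR (w n) l), ?_⟩
  rintro _ ⟨k, rfl⟩
  rcases le_total k n with hk | hk
  · exact (hM' ⟨k, hk, rfl⟩).trans (le_max_left _ _)
  · obtain ⟨j, rfl⟩ := Nat.exists_eq_add_of_le hk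
    refine le_trans ?_ (le_max_right _ _)
    have := hM ⟨j, rfl⟩
    simp only [dotR_rel] at this
    linarith

/-- A path with finitely many sites of level at most `c` has a minimal level, and stays above it
after any time at which it is attained. -/
lemma exists_rel_Splus_of_finite {w : PathSpace d} {l : Fin d → ℝ}
    {c : ℝ} (hne : ∃ n, dotR (w n) l ≤ c) (hfin : {x ∈ range w | dotR x l ≤ c}.Finite) :
    ∃ n, rel n w ∈ Splus l := by
  obtain ⟨n₀, hn₀⟩ := hne
  obtain ⟨_, ⟨⟨n, rfl⟩, hnc⟩, hn⟩ := exists_min_image _ (fun x => dotR x l) hfin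
    ⟨w n₀, ⟨n₀, rfl⟩, hn₀⟩
  refine ⟨n, mem_Splus_rel.2 fun k _ => ?_⟩
  rcases le_total (dotR (w k) l) c with h | h
  · exact hn _ ⟨⟨k, rfl⟩, h⟩
  · exact hnc.trans h

lemma exists_rel_Splus_of_Aplus {w : PathSpace d} {l : Fin d → ℝ} (h : w ∈ Aplus l) :
    ∃ n, rel n w ∈ Splus l := by
  refine exists_rel_Splus_of_finite (c := dotR (w 0) l) ⟨0, le_rfl⟩ ?_
  obtain ⟨N, hN⟩ := (h.eventually_gt_atTop (dotR (w 0) l)).exists_forall_of_atTop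
  refine ((finite_Iic N).image w).subset ?_
  rintro _ ⟨⟨k, rfl⟩, hk⟩
  refine ⟨k, ?_, rfl⟩
  by_contra hkN
  exact absurd hk (not_le.2 (hN k (le_of_lt (not_le.1 hkN))))

/-- The event of a strict record of the level at time `n`. -/
def Rec (l : Fin d → ℝ) (n : ℕ) : Set (PathSpace d) :=
  {w | ∀ k < n, dotR (w k) l < dotR (w n) l}

lemma detBy_Rec (l : Fin d → ℝ) (n : ℕ) : DetBy n (Rec l n) := by
  intro w w' hww hw k hk
  rw [← hww k hk.le, ← hww n le_rfl]
  exact hw k hk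

lemma frequently_Rec {w : PathSpace d} {l : Fin d → ℝ} (h : w ∉ Bdd l) :
    ∃ᶠ n in atTop, w ∈ Rec l n := by
  rw [frequently_atTop]
  intro N
  have h1 : BddAbove ((fun k => dotR (w k) l) '' (Iic N)) := ((finite_Iic N).image _).bddAbove
  have hex : ∃ n, ∀ k ≤ N, dotR (w k) l < dotR (w n) l := by
    obtain ⟨M, hM⟩ := h1
    by_contra! hcon
    refine h ⟨M, ?_⟩
    rintro _ ⟨n, rfl⟩
    obtain ⟨k, hk, hkn⟩ := hcon n
    exact hkn.trans (hM ⟨k, hk, rfl⟩)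
  refine ⟨Nat.find hex, ?_, ?_⟩
  · by_contra hlt
    exact lt_irrefl _ (Nat.find_spec hex _ (not_le.1 hlt).le)
  · intro k hk
    have := Nat.find_min hex hk
    push Not at this
    obtain ⟨j, hj, hjk⟩ := this
    exact hjk.trans_lt (Nat.find_spec hex j hj)

variable (μ : Measure (EnvDist d)) [IsProbabilityMeasure μ]

/-- An event `B ⊆ S_+` of positive probability occurs, as seen from the walk, at infinitely many
record times. -/
lemma rec_of_unbounded (l : Fin d → ℝ) {B : Set (PathSpace d)} (hB : MeasurableSet B)
    (hBS : B ⊆ Splus l) (hpos : ann μ 0 B ≠ 0) :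
    ∀ᵐ w ∂(ann μ 0), w ∉ Bdd l → ∀ N, ∃ n ≥ N, w ∈ Rec l n ∧ rel n w ∈ B := by
  have := infinitely_many_attempts (ann μ 0) (Rec l) (fun n => rel n ⁻¹' B) (detBy_Rec l)
    (fun n => measurable_rel n hB) (ann μ 0 B) hpos (fun n y hy => by
      rw [ann_regen μ n y hB (S := {z | 0 ≤ dotR z l}) (fun w hw k => hBS hw k), mul_comm]
      intro k hk
      simp only [mem_ofPred_eq, dotR_sub, sub_nonneg, not_le]
      exact hy k hk)
  filter_upwards [this] with w hw hwB
  exact hw (frequently_Rec hwB)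

lemma exists_rel_pos {B : Set (PathSpace d)} (hB : MeasurableSet B) {C : Set (PathSpace d)}
    (hC : ann μ 0 C ≠ 0) (h : ∀ᵐ w ∂(ann μ 0), w ∈ C → ∃ n, rel n w ∈ B) : ann μ 0 B ≠ 0 := by
  intro h0
  refine hC (measure_eq_zero_iff_ae_notMem.2 ?_)
  filter_upwards [h, ann_rel_null μ hB h0] with w h1 h2 hwC
  obtain ⟨n, hn⟩ := h1 hwC
  exact h2 n hn

/-- A transient path stays above its minimal level after reaching it, so that transience with
positive probability forces the walk to avoid the negative levels with positive probability. -/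
lemma Splus_pos_of_Aplus {l : Fin d → ℝ} (h : ann μ 0 (Aplus l) ≠ 0) :
    ann μ 0 (Splus l) ≠ 0 :=
  exists_rel_pos μ (measurableSet_Splus l) h
    (Eventually.of_forall fun _ hw => exists_rel_Splus_of_Aplus hw)

/-- If the level is unbounded then infinitely many records are followed by an excursion which never
gets below the record, so that the level tends to infinity. -/
lemma Aplus_of_unbounded {l : Fin d → ℝ} (h : ann μ 0 (Splus l) ≠ 0) :
    ∀ᵐ w ∂(ann μ 0), w ∉ Bdd l → w ∈ Aplus l := by
  filter_upwards [rec_of_unbounded μ l (measurableSet_Splus l) subset_rfl h] with w hw hwB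
  refine tendsto_atTop.2 fun M => ?_
  have : ∃ N, M < dotR (w N) l := by
    by_contra! hcon
    exact hwB ⟨M, by rintro _ ⟨n, rfl⟩; exact hcon n⟩
  obtain ⟨N, hN⟩ := this
  obtain ⟨n, hn, h1, h2⟩ := hw hwB (N + 1)
  filter_upwards [eventually_ge_atTop n] with k hk
  exact hN.le.trans ((h1 N (by omega)).le.trans (mem_Splus_rel.1 h2 k hk))

/-- Otherwise an unbounded path would almost surely become bounded after some record time. -/
lemma Splus_Bdd_null {l : Fin d → ℝ} (h : ann μ 0 (Aplus l) ≠ 0) :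
    ann μ 0 (Splus l ∩ Bdd l) = 0 := by
  by_contra hpos
  refine h (measure_eq_zero_iff_ae_notMem.2 ?_)
  filter_upwards [rec_of_unbounded μ l ((measurableSet_Splus l).inter (measurableSet_Bdd l))
    inter_subset_left hpos] with w hw hwA
  have hwB := not_mem_Bdd_of_mem_Aplus hwA
  obtain ⟨n, -, -, hn⟩ := hw hwB 0
  exact hwB (mem_Bdd_of_rel hn.2)

lemma Aplus_of_Splus {l : Fin d → ℝ} (h : ann μ 0 (Aplus l) ≠ 0) :
    ∀ᵐ w ∂(ann μ 0), w ∈ Splus l → w ∈ Aplus l := by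
  have h1 : ∀ᵐ w ∂(ann μ 0), w ∉ Splus l ∩ Bdd l :=
    measure_eq_zero_iff_ae_notMem.1 (Splus_Bdd_null μ h)
  filter_upwards [h1, Aplus_of_unbounded μ (Splus_pos_of_Aplus μ h)] with w h1 h2 h3
  exact h2 fun h4 => h1 ⟨h3, h4⟩

/-- The walk visits infinitely many sites: a finite range has a minimal level, after which the path
would be in `Splus l ∩ Bdd l`. -/
lemma range_infinite {l : Fin d → ℝ} (h : ann μ 0 (Aplus l) ≠ 0) :
    ∀ᵐ w ∂(ann μ 0), (range w).Infinite := by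
  have hm := (measurableSet_Splus l).inter (measurableSet_Bdd l)
  filter_upwards [ann_rel_null μ hm (Splus_Bdd_null μ h)] with w hw hfin
  obtain ⟨n, hn⟩ := exists_rel_Splus_of_finite (l := l) (c := dotR (w 0) l) ⟨0, le_rfl⟩
    (hfin.subset fun x hx => hx.1)
  refine hw n ⟨hn, ?_⟩
  refine ((hfin.image (fun x => dotR x l - dotR (w n) l)).bddAbove).mono ?_
  rintro _ ⟨k, rfl⟩
  exact ⟨w (n + k), ⟨_, rfl⟩, (dotR_rel n k w l).symm⟩

/-! ### Infinitely many sites above a given level -/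

/-- The walk is at a new site, of level at least `a`, at time `n`. -/
def NewSite (l : Fin d → ℝ) (a : ℝ) (n : ℕ) : Set (PathSpace d) :=
  {w | (∀ k < n, w k ≠ w n) ∧ a ≤ dotR (w n) l}

lemma detBy_NewSite (l : Fin d → ℝ) (a : ℝ) (n : ℕ) : DetBy n (NewSite l a n) := by
  rintro w w' hww ⟨hw1, hw2⟩
  refine ⟨fun k hk => ?_, ?_⟩
  · rw [← hww k hk.le, ← hww n le_rfl]; exact hw1 k hk
  · rw [← hww n le_rfl]; exact hw2

lemma frequently_NewSite {w : PathSpace d} {l : Fin d → ℝ} {a : ℝ}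
    (h : {x ∈ range w | a ≤ dotR x l}.Infinite) : ∃ᶠ n in atTop, w ∈ NewSite l a n := by
  rw [frequently_atTop]
  intro N
  obtain ⟨x, ⟨hx1, hx2⟩, hx3⟩ := h.exists_notMem_finset ((Finset.range N).image w)
  have hex : ∃ n, w n = x := hx1
  refine ⟨Nat.find hex, ?_, ?_, ?_⟩
  · by_contra hlt
    exact hx3 (Finset.mem_image.2 ⟨_, Finset.mem_range.2 (not_le.1 hlt), Nat.find_spec hex⟩)
  · intro k hk
    rw [Nat.find_spec hex]
    exact Nat.find_min hex hk
  · rw [Nat.find_spec hex]; exact hx2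

lemma exists_good_step {l : Fin d → ℝ} (h : ann μ 0 (Aplus l) ≠ 0) :
    ∃ e : Site d, 0 < dotR e l ∧ ann μ 0 {w | w 1 = e} ≠ 0 := by
  by_contra! hcon
  refine h (measure_eq_zero_iff_ae_notMem.2 ?_)
  have hm : MeasurableSet {w : PathSpace d | 0 < dotR (w 1) l} :=
    measurableSet_lt measurable_const (measurable_lev 1 l)
  have h0 : ann μ 0 {w | 0 < dotR (w 1) l} = 0 := by
    have : {w : PathSpace d | 0 < dotR (w 1) l} ⊆
        ⋃ (e : Site d) (_ : 0 < dotR e l), {w : PathSpace d | w 1 = e} := by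
      intro w hw
      exact mem_iUnion₂.2 ⟨w 1, hw, rfl⟩
    refine measure_mono_null this ?_
    exact measure_iUnion_null fun e => measure_iUnion_null fun he => hcon e he
  filter_upwards [ann_rel_null μ hm h0] with w hw hwA
  have hanti : Antitone fun n => dotR (w n) l := by
    refine antitone_nat_of_succ_le fun n => ?_
    have := hw n
    simp only [dotR_rel, not_lt] at this
    linarith
  refine not_mem_Bdd_of_mem_Aplus hwA ⟨dotR (w 0) l, ?_⟩
  rintro _ ⟨n, rfl⟩
  exact hanti (Nat.zero_le n)

/-- If the level is bounded then only finitely many sites are visited above any level: with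
infinitely many sites above `a` there would be infinitely many new sites there, hence infinitely
many sites one good step higher, and so on. -/
lemma finite_above {l : Fin d → ℝ} (h : ann μ 0 (Aplus l) ≠ 0) :
    ∀ᵐ w ∂(ann μ 0), w ∈ Bdd l → ∀ a : ℝ, {x ∈ range w | a ≤ dotR x l}.Finite := by
  obtain ⟨e, he, hepos⟩ := exists_good_step μ h
  have key := fun p : ℕ × ℕ => infinitely_many_attempts (ann μ 0)
    (NewSite l (-(p.1 : ℝ) + p.2 * dotR e l)) (fun n => rel n ⁻¹' {w | w 1 = e})
    (detBy_NewSite l _)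
    (fun n => measurable_rel n
      (measurable_pi_apply (X := fun _ => Site d) 1 (measurableSet_singleton e)))
    _ hepos (fun n y hy => by rw [ann_new_step μ n y e hy.1, mul_comm])
  filter_upwards [ae_all_iff.2 key] with w hw hwB a
  by_contra hinf
  obtain ⟨j, hj⟩ := exists_nat_ge (-a)
  have hind : ∀ k : ℕ, {x ∈ range w | -(j : ℝ) + k * dotR e l ≤ dotR x l}.Infinite := by
    intro k
    induction k with
    | zero =>
      refine Set.Infinite.mono (fun x hx => ⟨hx.1, le_trans ?_ hx.2⟩) hinf
      push_cast; linarith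
    | succ k ih =>
      have h1 := hw (j, k) (frequently_NewSite ih)
      have h2 : {n : ℕ | w ∈ NewSite l (-(j : ℝ) + k * dotR e l) n ∧ rel n w 1 = e}.Infinite := by
        rw [Set.infinite_iff_exists_gt]
        intro N
        obtain ⟨n, hn, h3⟩ := h1 (N + 1)
        exact ⟨n, h3, by omega⟩
      have hinj : InjOn (fun n => w (n + 1))
          {n : ℕ | w ∈ NewSite l (-(j : ℝ) + k * dotR e l) n ∧ rel n w 1 = e} := by
        rintro n ⟨⟨hn1, -⟩, hn2⟩ m ⟨⟨hm1, -⟩, hm2⟩ hnm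
        have h4 : w n = w m := by
          simp only [rel] at hn2 hm2 hnm
          have : w (n + 1) - w n = w (m + 1) - w m := hn2.trans hm2.symm
          rw [hnm] at this
          exact sub_right_injective this
        rcases lt_trichotomy n m with hlt | heq | hlt
        · exact absurd h4 (hm1 n hlt)
        · exact heq
        · exact absurd h4.symm (hn1 m hlt)
      refine (h2.image hinj).mono ?_
      rintro _ ⟨n, ⟨⟨-, hn⟩, hn2⟩, rfl⟩
      refine ⟨⟨_, rfl⟩, ?_⟩
      have h5 : w (n + 1) = w n + e := by rw [← hn2]; simp [rel]
      simp only [h5, dotR_add]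
      push_cast
      linarith
  obtain ⟨M, hM⟩ := hwB
  obtain ⟨k, hk⟩ := exists_nat_gt ((M + j) / dotR e l)
  obtain ⟨_, ⟨n, rfl⟩, hn⟩ := (hind k).nonempty
  rw [div_lt_iff₀ he] at hk
  have := hM ⟨n, rfl⟩
  simp only at this
  linarith

/-- If the walk is transient in the direction `l` with positive probability and has bounded level
with positive probability, then it is transient in the direction `-l` with positive
probability. -/
lemma Aminus_pos {l : Fin d → ℝ} (h : ann μ 0 (Aplus l) ≠ 0) (hb : ann μ 0 (Bdd l) ≠ 0) :
    ann μ 0 (Aplus (-l)) ≠ 0 := by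
  have hS : ann μ 0 (Splus (-l)) ≠ 0 := by
    refine exists_rel_pos μ (measurableSet_Splus (-l)) hb ?_
    filter_upwards [finite_above μ h] with w hw hwB
    refine exists_rel_Splus_of_finite (c := dotR (w 0) (-l)) ⟨0, le_rfl⟩ ?_
    simpa only [dotR_neg, neg_le_neg_iff] using hw hwB (dotR (w 0) l)
  intro h0
  refine hb (measure_eq_zero_iff_ae_notMem.2 ?_)
  filter_upwards [Aplus_of_unbounded μ hS, measure_eq_zero_iff_ae_notMem.1 h0, finite_above μ h,
    range_infinite μ h] with w h1 h2 h3 h4 hwB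
  have h5 : w ∈ Bdd (-l) := by
    by_contra h5
    exact h2 (h1 h5)
  obtain ⟨M, hM⟩ := h5
  refine h4 ((h3 hwB (-M)).subset ?_)
  rintro _ ⟨n, rfl⟩
  refine ⟨⟨n, rfl⟩, ?_⟩
  have := hM ⟨n, rfl⟩
  simp only [dotR_neg] at this
  linarith

/-- Reduction of the zero-one law to the impossibility of transience in two opposite directions. -/
lemma zero_one_of_not_both {l : Fin d → ℝ}
    (h : ¬ (ann μ 0 (Aplus l) ≠ 0 ∧ ann μ 0 (Aplus (-l)) ≠ 0)) :
    ann μ 0 (Aplus l) = 0 ∨ ann μ 0 (Aplus l) = 1 := by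
  by_cases h0 : ann μ 0 (Aplus l) = 0
  · exact Or.inl h0
  right
  have hb : ann μ 0 (Bdd l) = 0 := by
    by_contra hb
    exact h ⟨h0, Aminus_pos μ h0 hb⟩
  have : ∀ᵐ w ∂(ann μ 0), w ∈ Aplus l := by
    filter_upwards [Aplus_of_unbounded μ (Splus_pos_of_Aplus μ h0),
      measure_eq_zero_iff_ae_notMem.1 hb] with w h1 h2 using h1 h2
  exact mem_ae_iff_prob_eq_one (measurableSet_Aplus l) |>.1 this

end

section

/-! ### Lattice paths in the plane which cross -/

/-- `(a, b)` is one of the four unit vectors of `ℤ²`. -/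
def IsUnitVec (a b : ℤ) : Prop := (a = 0 ∧ (b = 1 ∨ b = -1)) ∨ (b = 0 ∧ (a = 1 ∨ a = -1))

/-- The signed crossing number of the lattice edge from `(pu, pv)` to `(qu, qv)` with the ray
`{(u, 1/2) : u > 0}`. -/
def crossing (pu pv qu qv : ℤ) : ℤ :=
  if 0 < pu ∧ 0 < qu then (if 1 ≤ qv then 1 else 0) - (if 1 ≤ pv then 1 else 0) else 0

/-- The crossing numbers around a unit cell which does not contain the origin add up to zero. -/
lemma crossing_cell {pu pv su sv ru rv : ℤ} (hs : IsUnitVec su sv) (hr : IsUnitVec ru rv)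
    (h0 : ¬ (pu = 0 ∧ pv = 0)) (h1 : ¬ (pu - su = 0 ∧ pv - sv = 0))
    (h2 : ¬ (pu + ru = 0 ∧ pv + rv = 0)) (h3 : ¬ (pu + ru - su = 0 ∧ pv + rv - sv = 0)) :
    crossing pu pv (pu - su) (pv - sv) +
      crossing (pu - su) (pv - sv) (pu + ru - su) (pv + rv - sv) =
    crossing pu pv (pu + ru) (pv + rv) +
      crossing (pu + ru) (pv + rv) (pu + ru - su) (pv + rv - sv) := by
  unfold crossing
  rcases hs with ⟨rfl, rfl | rfl⟩ | ⟨rfl, rfl | rfl⟩ <;>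
  rcases hr with ⟨rfl, rfl | rfl⟩ | ⟨rfl, rfl | rfl⟩ <;> grind

/-- Discrete Green formula on the rectangle `[0, m] × [0, n]`: if the circulation around each cell
vanishes, then so does the circulation around the rectangle. -/
lemma sum_cells {m n : ℕ} (h v : ℕ → ℕ → ℤ)
    (hc : ∀ i < m, ∀ j < n, h i j + v (i + 1) j = v i j + h i (j + 1)) :
    ∑ i ∈ Finset.range m, h i 0 + ∑ j ∈ Finset.range n, v m j =
      ∑ j ∈ Finset.range n, v 0 j + ∑ i ∈ Finset.range m, h i n := by
  have hrow : ∀ i < m, h i 0 + ∑ j ∈ Finset.range n, v (i + 1) j =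
      ∑ j ∈ Finset.range n, v i j + h i n := by
    intro i hi
    have : ∀ k ≤ n, h i 0 + ∑ j ∈ Finset.range k, v (i + 1) j =
        ∑ j ∈ Finset.range k, v i j + h i k := by
      intro k hk
      induction k with
      | zero => simp
      | succ k ih =>
        rw [Finset.sum_range_succ, Finset.sum_range_succ]
        linarith [ih (by omega), hc i hi k (by omega)]
    exact this n le_rfl
  have : ∀ k ≤ m, ∑ i ∈ Finset.range k, h i 0 + ∑ j ∈ Finset.range n, v k j =
      ∑ j ∈ Finset.range n, v 0 j + ∑ i ∈ Finset.range k, h i n := by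
    intro k hk
    induction k with
    | zero => simp
    | succ k ih =>
      rw [Finset.sum_range_succ, Finset.sum_range_succ]
      linarith [ih (by omega), hrow k (by omega)]
  exact this m le_rfl

/-- A potential of the crossing number for edges which avoid the half-axis `u = 0`, `v ≤ 0`; such
are the edges in the half-plane of levels larger than `-β`, away from the origin. -/
def potLow (u v : ℤ) : ℤ := if v ≤ 0 ∧ 0 < u then 0 else 1

/-- A potential of the crossing number for edges which avoid the half-axis `u = 0`, `v ≥ 0`; such
are the edges in the half-plane of levels smaller than `β`, away from the origin. -/
def potHigh (u v : ℤ) : ℤ := if 1 ≤ v ∧ 0 < u then 1 else 0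

lemma crossing_potLow {pu pv qu qv : ℤ} (h : IsUnitVec (qu - pu) (qv - pv))
    (hp : pu = 0 → 0 < pv) (hq : qu = 0 → 0 < qv) :
    crossing pu pv qu qv = potLow qu qv - potLow pu pv := by
  unfold crossing potLow
  rcases h with ⟨h1, h2 | h2⟩ | ⟨h1, h2 | h2⟩ <;> grind

lemma crossing_potHigh {pu pv qu qv : ℤ} (h : IsUnitVec (qu - pu) (qv - pv))
    (hp : pu = 0 → pv < 0) (hq : qu = 0 → qv < 0) :
    crossing pu pv qu qv = potHigh qu qv - potHigh pu pv := by
  unfold crossing potHigh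
  rcases h with ⟨h1, h2 | h2⟩ | ⟨h1, h2 | h2⟩ <;> grind

lemma pot_sub (u v : ℤ) : potLow u v - potHigh u v = if u ≤ 0 then 1 else 0 := by
  unfold potLow potHigh; grind

lemma IsUnitVec.neg {a b : ℤ} (h : IsUnitVec a b) : IsUnitVec (-a) (-b) := by
  unfold IsUnitVec at *; omega

/-- Let `x` be a path from the origin to `a`, and `y` a path from `y 0` to `b`, where
`x`, `y` do not meet, both stay between the levels `0` and `L`, up to one step, and `a` has
level about `L`, `b` has level about `0`. Then `b` lies to the right of the origin if and only
if `y 0` lies to the right of `a`. -/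
lemma crossing_paths {xu xv yu yv : ℕ → ℤ} {m n : ℕ} {α β L : ℝ} (hβ : 0 < β)
    (hx : ∀ i < m, IsUnitVec (xu (i + 1) - xu i) (xv (i + 1) - xv i))
    (hy : ∀ j < n, IsUnitVec (yu (j + 1) - yu j) (yv (j + 1) - yv j))
    (hxu : xu 0 = 0) (hxv : xv 0 = 0)
    (hdisj : ∀ i ≤ m, ∀ j ≤ n, ¬ (xu i = yu j ∧ xv i = yv j))
    (hx0 : ∀ i ≤ m, 0 ≤ xu i * α + xv i * β)
    (hx1 : ∀ i ≤ m, xu i * α + xv i * β < L + β)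
    (hxm : L ≤ xu m * α + xv m * β)
    (hy0 : ∀ j ≤ n, -β < yu j * α + yv j * β)
    (hy1 : ∀ j ≤ n, yu j * α + yv j * β < L + β)
    (hyy : L ≤ yu 0 * α + yv 0 * β)
    (hyn : yu n * α + yv n * β ≤ 0) :
    yu 0 ≤ xu m ↔ yu n ≤ 0 := by
  -- differences of levels on the vertical axis
  have low : ∀ i ≤ m, ∀ j ≤ n, -β < (yu j - xu i) * α + (yv j - xv i) * β →
      (yu j - xu i = 0 → 0 < yv j - xv i) := by
    intro i hi j hj h hu
    have hu' : (yu j : ℝ) - xu i = 0 := by exact_mod_cast hu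
    rw [hu', zero_mul, zero_add] at h
    have h1 : (-1 : ℝ) < yv j - xv i := by
      by_contra hcon
      nlinarith [not_lt.1 hcon]
    have h2 : (-1 : ℤ) < yv j - xv i := by exact_mod_cast h1
    have h3 := hdisj i hi j hj
    omega
  have high : ∀ i ≤ m, ∀ j ≤ n, (yu j - xu i) * α + (yv j - xv i) * β < β →
      (yu j - xu i = 0 → yv j - xv i < 0) := by
    intro i hi j hj h hu
    have hu' : (yu j : ℝ) - xu i = 0 := by exact_mod_cast hu
    rw [hu', zero_mul, zero_add] at h
    have h1 : (yv j : ℝ) - xv i < 1 := by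
      by_contra hcon
      nlinarith [not_lt.1 hcon]
    have h2 : yv j - xv i < (1 : ℤ) := by exact_mod_cast h1
    have h3 := hdisj i hi j hj
    omega
  let h : ℕ → ℕ → ℤ := fun i j => crossing (yu j - xu i) (yv j - xv i)
    (yu j - xu (i + 1)) (yv j - xv (i + 1))
  let v : ℕ → ℕ → ℤ := fun i j => crossing (yu j - xu i) (yv j - xv i)
    (yu (j + 1) - xu i) (yv (j + 1) - xv i)
  have hsum := sum_cells (m := m) (n := n) h v (by
    intro i hi j hj
    have := crossing_cell (pu := yu j - xu i) (pv := yv j - xv i) (hx i hi) (hy j hj)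
      (by have := hdisj i (by omega) j (by omega); omega)
      (by have := hdisj (i + 1) (by omega) j (by omega); omega)
      (by have := hdisj i (by omega) (j + 1) (by omega); omega)
      (by have := hdisj (i + 1) (by omega) (j + 1) (by omega); omega)
    simp only [h, v]
    convert this using 3 <;> ring)
  have hxs : ∀ j, ∀ i < m, IsUnitVec ((yu j - xu (i + 1)) - (yu j - xu i))
      ((yv j - xv (i + 1)) - (yv j - xv i)) := by
    intro j i hi
    convert (hx i hi).neg using 1 <;> ring
  have hys : ∀ i, ∀ j < n, IsUnitVec ((yu (j + 1) - xu i) - (yu j - xu i))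
      ((yv (j + 1) - xv i) - (yv j - xv i)) := by
    intro i j hj
    convert hy j hj using 1 <;> ring
  have e1 : ∑ i ∈ Finset.range m, h i 0 =
      potLow (yu 0 - xu m) (yv 0 - xv m) - potLow (yu 0 - xu 0) (yv 0 - xv 0) := by
    rw [← Finset.sum_range_sub (fun i => potLow (yu 0 - xu i) (yv 0 - xv i))]
    refine Finset.sum_congr rfl fun i hi => ?_
    have hi := Finset.mem_range.1 hi
    refine crossing_potLow (hxs 0 i hi) (low i (by omega) 0 (by omega) ?_)
      (low (i + 1) (by omega) 0 (by omega) ?_)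
    · linarith [hx1 i (by omega)]
    · linarith [hx1 (i + 1) (by omega)]
  have e2 : ∑ j ∈ Finset.range n, v m j =
      potHigh (yu n - xu m) (yv n - xv m) - potHigh (yu 0 - xu m) (yv 0 - xv m) := by
    rw [← Finset.sum_range_sub (fun j => potHigh (yu j - xu m) (yv j - xv m))]
    refine Finset.sum_congr rfl fun j hj => ?_
    have hj := Finset.mem_range.1 hj
    refine crossing_potHigh (hys m j hj) (high m le_rfl j (by omega) ?_)
      (high m le_rfl (j + 1) (by omega) ?_)
    · linarith [hy1 j (by omega)]
    · linarith [hy1 (j + 1) (by omega)]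
  have e3 : ∑ j ∈ Finset.range n, v 0 j =
      potLow (yu n - xu 0) (yv n - xv 0) - potLow (yu 0 - xu 0) (yv 0 - xv 0) := by
    rw [← Finset.sum_range_sub (fun j => potLow (yu j - xu 0) (yv j - xv 0))]
    refine Finset.sum_congr rfl fun j hj => ?_
    have hj := Finset.mem_range.1 hj
    have hx00 : (xu 0 : ℝ) = 0 := by exact_mod_cast hxu
    have hx01 : (xv 0 : ℝ) = 0 := by exact_mod_cast hxv
    refine crossing_potLow (hys 0 j hj) (low 0 (by omega) j (by omega) ?_)
      (low 0 (by omega) (j + 1) (by omega) ?_)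
    · rw [hx00, hx01, sub_zero, sub_zero]; exact hy0 j (by omega)
    · rw [hx00, hx01, sub_zero, sub_zero]; exact hy0 (j + 1) (by omega)
  have e4 : ∑ i ∈ Finset.range m, h i n =
      potHigh (yu n - xu m) (yv n - xv m) - potHigh (yu n - xu 0) (yv n - xv 0) := by
    rw [← Finset.sum_range_sub (fun i => potHigh (yu n - xu i) (yv n - xv i))]
    refine Finset.sum_congr rfl fun i hi => ?_
    have hi := Finset.mem_range.1 hi
    refine crossing_potHigh (hxs n i hi) (high i (by omega) n le_rfl ?_)
      (high (i + 1) (by omega) n le_rfl ?_)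
    · linarith [hx0 i (by omega)]
    · linarith [hx0 (i + 1) (by omega)]
  have f1 := pot_sub (yu 0 - xu m) (yv 0 - xv m)
  have f2 := pot_sub (yu n - xu 0) (yv n - xv 0)
  rw [e1, e2, e3, e4] at hsum
  rw [hxu, hxv] at f2 hsum
  have f3 : (if yu 0 - xu m ≤ 0 then (1 : ℤ) else 0) = if yu n - 0 ≤ 0 then 1 else 0 := by
    linarith
  split_ifs at f3 <;> omega

end

section

variable {d : ℕ}

/-! ### Two walks in the same environment -/

lemma pair_tsum (m : Measure (PathSpace d × PathSpace d)) (n : ℕ)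
    {A : Set (PathSpace d × PathSpace d)} (hA : MeasurableSet A) :
    m A = ∑' f : (Fin (n + 1) → Site d) × (Fin (n + 1) → Site d),
      m (A ∩ cyl n (extPath n f.1) ×ˢ cyl n (extPath n f.2)) := by
  rw [← measure_iUnion]
  · congr 1
    ext ⟨w, v⟩
    simp only [mem_iUnion, mem_inter_iff, mem_prod, mem_cyl_extPath]
    exact ⟨fun h => ⟨(_, _), h, rfl, rfl⟩, fun ⟨f, h, _⟩ => h⟩
  · intro f g hfg
    refine Set.disjoint_left.2 ?_
    rintro ⟨w, v⟩ ⟨-, h1, h2⟩ ⟨-, h3, h4⟩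
    simp only [mem_cyl_extPath] at h1 h2 h3 h4
    exact hfg (Prod.ext (h1.symm.trans h3) (h2.symm.trans h4))
  · exact fun f => hA.inter ((measurableSet_cyl _ _).prod (measurableSet_cyl _ _))

/-- A law of a pair of paths is determined by its values on products of cylinders. -/
lemma pair_ext {m₁ m₂ : Measure (PathSpace d × PathSpace d)} [IsFiniteMeasure m₁]
    [IsFiniteMeasure m₂]
    (h : ∀ n k a b, m₁ (cyl n a ×ˢ cyl k b) = m₂ (cyl n a ×ˢ cyl k b)) : m₁ = m₂ := by
  have h1 : ∀ n a (t : Set (PathSpace d)), MeasurableSet t →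
      m₁ (cyl n a ×ˢ t) = m₂ (cyl n a ×ˢ t) := by
    intro n a t ht
    have e : (m₁.restrict (cyl n a ×ˢ univ)).map Prod.snd =
        (m₂.restrict (cyl n a ×ˢ univ)).map Prod.snd := by
      refine path_ext fun k b => ?_
      rw [Measure.map_apply measurable_snd (measurableSet_cyl k b),
        Measure.map_apply measurable_snd (measurableSet_cyl k b),
        Measure.restrict_apply (measurable_snd (measurableSet_cyl k b)),
        Measure.restrict_apply (measurable_snd (measurableSet_cyl k b))]
      convert h n k a b using 2 <;> (ext; simp; tauto)
    have := congrArg (fun m => m t) e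
    simp only [Measure.map_apply measurable_snd ht,
      Measure.restrict_apply (measurable_snd ht)] at this
    convert this using 2 <;> (ext; simp; tauto)
  refine Measure.ext_prod fun {s t} hs ht => ?_
  have e : (m₁.restrict (univ ×ˢ t)).map Prod.fst = (m₂.restrict (univ ×ˢ t)).map Prod.fst := by
    refine path_ext fun n a => ?_
    rw [Measure.map_apply measurable_fst (measurableSet_cyl n a),
      Measure.map_apply measurable_fst (measurableSet_cyl n a),
      Measure.restrict_apply (measurable_fst (measurableSet_cyl n a)),
      Measure.restrict_apply (measurable_fst (measurableSet_cyl n a))]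
    convert h1 n a t ht using 2 <;> (ext; simp)
  have := congrArg (fun m => m s) e
  simp only [Measure.map_apply measurable_fst hs,
    Measure.restrict_apply (measurable_fst hs)] at this
  convert this using 2 <;> (ext; simp)

variable (μ : Measure (EnvDist d)) [IsProbabilityMeasure μ]

/-- The annealed law of two walks, started at `x` and `y`, which are independent given a common
environment. -/
noncomputable def same (x y : Site d) : Measure (PathSpace d × PathSpace d) :=
  (nu μ).bind (fun ω => (Q ω x).prod (Q ω y))

lemma measurable_Q_prod (x y : Site d) :
    Measurable fun ω : EnvOmega d => (Q ω x).prod (Q ω y) := by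
  have h := (ProbabilityTheory.Kernel.prod (QK x) (QK y)).measurable
  convert h using 1
  ext1 ω
  rw [ProbabilityTheory.Kernel.prod_apply]
  rfl

lemma same_apply (x y : Site d) {B : Set (PathSpace d × PathSpace d)} (hB : MeasurableSet B) :
    same μ x y B = ∫⁻ ω, (Q ω x).prod (Q ω y) B ∂(nu μ) :=
  Measure.bind_apply hB (measurable_Q_prod x y).aemeasurable

instance (x y : Site d) : IsProbabilityMeasure (same μ x y) := by
  constructor
  rw [same_apply μ x y .univ]
  simp

lemma same_prod (x y : Site d) {A B : Set (PathSpace d)} (hA : MeasurableSet A)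
    (hB : MeasurableSet B) : same μ x y (A ×ˢ B) = ∫⁻ ω, Q ω x A * Q ω y B ∂(nu μ) := by
  rw [same_apply μ x y (hA.prod hB)]
  simp only [Measure.prod_prod]

lemma same_fst (x y : Site d) {A : Set (PathSpace d)} (hA : MeasurableSet A) :
    same μ x y (Prod.fst ⁻¹' A) = ann μ x A := by
  rw [← prod_univ, same_prod μ x y hA .univ, ann_apply μ x hA]
  simp

lemma same_snd (x y : Site d) {B : Set (PathSpace d)} (hB : MeasurableSet B) :
    same μ x y (Prod.snd ⁻¹' B) = ann μ y B := by
  rw [← univ_prod, same_prod μ x y .univ hB, ann_apply μ y hB]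
  simp

lemma same_swap (x y : Site d) {B : Set (PathSpace d × PathSpace d)} (hB : MeasurableSet B) :
    same μ x y B = same μ y x (Prod.swap ⁻¹' B) := by
  rw [same_apply μ x y hB, same_apply μ y x (measurable_swap hB)]
  refine lintegral_congr fun ω => ?_
  rw [← Measure.prod_swap, Measure.map_apply measurable_swap hB]

/-- The event that the two paths have a common site. -/
def Meet : Set (PathSpace d × PathSpace d) := {p | ∃ i j, p.1 i = p.2 j}

lemma measurableSet_eq_site (i j : ℕ) :
    MeasurableSet {p : PathSpace d × PathSpace d | p.1 i = p.2 j} :=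
  measurableSet_eq_fun ((measurable_pi_apply i).comp measurable_fst)
    ((measurable_pi_apply j).comp measurable_snd)

lemma measurableSet_Meet : MeasurableSet (Meet : Set (PathSpace d × PathSpace d)) := by
  have : (Meet : Set (PathSpace d × PathSpace d)) = ⋃ i, ⋃ j, {p | p.1 i = p.2 j} := by
    ext; simp [Meet]
  rw [this]
  exact MeasurableSet.iUnion fun i => MeasurableSet.iUnion fun j => measurableSet_eq_site i j

/-- As long as they do not meet, two walks in the same environment behave like two walks in
independent environments. -/
lemma same_eq_indep (x y : Site d) {B : Set (PathSpace d × PathSpace d)} (hB : MeasurableSet B) :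
    same μ x y (B ∩ Meetᶜ) = ((ann μ x).prod (ann μ y)) (B ∩ Meetᶜ) := by
  have hcyl : ∀ (n : ℕ) (a b : ℕ → Site d), (∀ i ≤ n, ∀ j ≤ n, a i ≠ b j) →
      same μ x y (cyl n a ×ˢ cyl n b) = ((ann μ x).prod (ann μ y)) (cyl n a ×ˢ cyl n b) := by
    intro n a b hab
    rw [same_prod μ x y (measurableSet_cyl n a) (measurableSet_cyl n b), Measure.prod_prod,
      ann_apply μ x (measurableSet_cyl n a), ann_apply μ y (measurableSet_cyl n b)]
    refine lintegral_mul_of_dependsOn μ (measurable_Q_apply _ (measurableSet_cyl n a))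
      (measurable_Q_apply _ (measurableSet_cyl n b)) (S := a '' Iic n) (T := b '' Iic n) ?_ ?_ ?_
    · intro ω ω' hω
      simp only [Q_cyl]
      rw [qw_congr n a (fun k hk => mem_image_of_mem _ (le_of_lt hk)) hω]
    · intro ω ω' hω
      simp only [Q_cyl]
      rw [qw_congr n b (fun k hk => mem_image_of_mem _ (le_of_lt hk)) hω]
    · refine Set.disjoint_left.2 ?_
      rintro _ ⟨i, hi, rfl⟩ ⟨j, hj, h⟩
      exact hab i hi j hj h.symm
  have key : (same μ x y).restrict Meetᶜ = ((ann μ x).prod (ann μ y)).restrict Meetᶜ := by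
    refine pair_ext fun n k a b => ?_
    have hR := (measurableSet_cyl n a).prod (measurableSet_cyl k b)
    rw [Measure.restrict_apply hR, Measure.restrict_apply hR]
    let D : ℕ → Set (PathSpace d × PathSpace d) := fun N =>
      cyl n a ×ˢ cyl k b ∩ {p | ∀ i ≤ max n k + N, ∀ j ≤ max n k + N, p.1 i ≠ p.2 j}
    have hDm : ∀ N, MeasurableSet (D N) := by
      intro N
      refine hR.inter ?_
      have : {p : PathSpace d × PathSpace d |
          ∀ i ≤ max n k + N, ∀ j ≤ max n k + N, p.1 i ≠ p.2 j} =
          ⋂ i, ⋂ (_ : i ≤ max n k + N), ⋂ j, ⋂ (_ : j ≤ max n k + N), {p | p.1 i = p.2 j}ᶜ := by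
        ext; simp
      rw [this]
      exact MeasurableSet.iInter fun i => MeasurableSet.iInter fun _ =>
        MeasurableSet.iInter fun j => MeasurableSet.iInter fun _ => (measurableSet_eq_site i j).compl
    have hD : cyl n a ×ˢ cyl k b ∩ Meetᶜ = ⋂ N, D N := by
      ext p
      simp only [D, Meet, mem_inter_iff, mem_iInter, mem_compl_iff, mem_ofPred_eq, not_exists]
      constructor
      · rintro ⟨h1, h2⟩ N
        exact ⟨h1, fun i _ j _ => h2 i j⟩
      · intro h
        refine ⟨(h 0).1, fun i j => (h (max i j)).2 i ?_ j ?_⟩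
        · exact (le_max_left i j).trans (Nat.le_add_left _ _)
        · exact (le_max_right i j).trans (Nat.le_add_left _ _)
    have hanti : Antitone D := by
      intro A B hab p hp
      exact ⟨hp.1, fun i hi j hj => hp.2 i (by omega) j (by omega)⟩
    rw [hD, hanti.measure_iInter (fun m => (hDm m).nullMeasurableSet) ⟨0, measure_ne_top _ _⟩,
      hanti.measure_iInter (fun m => (hDm m).nullMeasurableSet) ⟨0, measure_ne_top _ _⟩]
    congr 1
    ext1 N
    obtain ⟨M, hM⟩ : ∃ M, M = max n k + N := ⟨_, rfl⟩
    rw [pair_tsum _ M (hDm N), pair_tsum ((ann μ x).prod (ann μ y)) M (hDm N)]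
    refine tsum_congr fun f => ?_
    -- the event `D N` is determined by the two paths up to time `M`
    have hdet : ∀ p q : PathSpace d × PathSpace d, (∀ i ≤ M, p.1 i = q.1 i) →
        (∀ i ≤ M, p.2 i = q.2 i) → p ∈ D N → q ∈ D N := by
      rintro p q h1 h2 ⟨⟨h3, h4⟩, h5⟩
      refine ⟨⟨fun i hi => ?_, fun i hi => ?_⟩, fun i hi j hj => ?_⟩
      · rw [← h1 i (by omega)]; exact h3 i hi
      · rw [← h2 i (by omega)]; exact h4 i hi
      · rw [← h1 i (by omega), ← h2 j (by omega)]; exact h5 i hi j hj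
    by_cases hf : (extPath M f.1, extPath M f.2) ∈ D N
    · have : D N ∩ cyl M (extPath M f.1) ×ˢ cyl M (extPath M f.2) =
          cyl M (extPath M f.1) ×ˢ cyl M (extPath M f.2) :=
        inter_eq_right.2 fun p hp => hdet _ _ (fun i hi => (hp.1 i hi).symm)
          (fun i hi => (hp.2 i hi).symm) hf
      rw [this, hcyl M _ _ fun i hi j hj => hf.2 i (by omega) j (by omega)]
    · have : D N ∩ cyl M (extPath M f.1) ×ˢ cyl M (extPath M f.2) = ∅ := by
        ext p
        simp only [mem_inter_iff, mem_empty_iff_false, iff_false, not_and]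
        exact fun hp hc => hf (hdet _ _ hc.1 hc.2 hp)
      rw [this, measure_empty, measure_empty]
  have := congrArg (fun m => m B) key
  simpa only [Measure.restrict_apply hB] using this

end

section

variable {d : ℕ}

/-! ### Meetings of two walks in the same environment -/

/-- The walk visits `S` for the first time at time `n`. -/
def FirstHit (S : Set (Site d)) (n : ℕ) : Set (PathSpace d) := {w | w n ∈ S ∧ ∀ k < n, w k ∉ S}

lemma detBy_FirstHit (S : Set (Site d)) (n : ℕ) : DetBy n (FirstHit S n) := by
  rintro w w' hww ⟨h1, h2⟩
  exact ⟨hww n le_rfl ▸ h1, fun k hk => hww k hk.le ▸ h2 k hk⟩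

lemma disjoint_FirstHit (S : Set (Site d)) : Pairwise (Function.onFun Disjoint (FirstHit S)) := by
  intro n m hnm
  refine Set.disjoint_left.2 ?_
  rintro w ⟨h1, h2⟩ ⟨h3, h4⟩
  rcases lt_or_gt_of_ne hnm with h | h
  · exact h4 n h h1
  · exact h2 m h h3

lemma exists_FirstHit {S : Set (Site d)} {w : PathSpace d} (h : ∃ n, w n ∈ S) :
    ∃ n, w ∈ FirstHit S n :=
  ⟨Nat.find h, Nat.find_spec h, fun _ hk => Nat.find_min h hk⟩

/-- Strong Markov property at the first visit to `S`, as an upper bound. -/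
lemma Q_FirstHit_le (ω : EnvOmega d) (x : Site d) (S : Set (Site d)) {D : Set (PathSpace d)}
    (hD : MeasurableSet D) {ε : ℝ≥0∞} (h : ∀ z ∈ S, Q ω z D ≤ ε) (n : ℕ) :
    Q ω x (FirstHit S n ∩ tsh n ⁻¹' D) ≤ ε * Q ω x (FirstHit S n) := by
  have hF := (detBy_FirstHit S n).measurableSet
  rw [measure_eq_tsum_cyl _ n (hF.inter (measurable_tsh n hD)), measure_eq_tsum_cyl _ n hF,
    ← ENNReal.tsum_mul_left]
  refine ENNReal.tsum_le_tsum fun f => ?_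
  rw [inter_right_comm]
  by_cases hf : extPath n f ∈ FirstHit S n
  · rw [(detBy_FirstHit S n).inter_cyl hf, Q_markov ω x n _ hD, mul_comm]
    gcongr
    exact h _ hf.1
  · rw [(detBy_FirstHit S n).inter_cyl_eq_empty hf]; simp

/-- Strong Markov property at the first visit to `S`, as a lower bound. -/
lemma le_Q_FirstHit (ω : EnvOmega d) (x : Site d) (S : Set (Site d)) {D : Set (PathSpace d)}
    (hD : MeasurableSet D) {ε : ℝ≥0∞} (h : ∀ z ∈ S, ε ≤ Q ω z D) (n : ℕ) :
    ε * Q ω x (FirstHit S n) ≤ Q ω x (FirstHit S n ∩ tsh n ⁻¹' D) := by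
  have hF := (detBy_FirstHit S n).measurableSet
  rw [measure_eq_tsum_cyl _ n (hF.inter (measurable_tsh n hD)), measure_eq_tsum_cyl _ n hF,
    ← ENNReal.tsum_mul_left]
  refine ENNReal.tsum_le_tsum fun f => ?_
  rw [inter_right_comm]
  by_cases hf : extPath n f ∈ FirstHit S n
  · rw [(detBy_FirstHit S n).inter_cyl hf, Q_markov ω x n _ hD, mul_comm]
    gcongr
    exact h _ hf.1
  · rw [(detBy_FirstHit S n).inter_cyl_eq_empty hf]; simp

/-- The walk goes from level at least `c + K` to a level below `c`. -/
def Fall (l : Fin d → ℝ) (c K : ℝ) : Set (PathSpace d) :=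
  {w | ∃ n, c + K ≤ dotR (w n) l ∧ ∃ m ≥ n, dotR (w m) l < c}

lemma measurableSet_Fall (l : Fin d → ℝ) (c K : ℝ) : MeasurableSet (Fall l c K) := by
  have : Fall l c K = ⋃ n, ({w : PathSpace d | c + K ≤ dotR (w n) l} ∩
      ⋃ m, ⋃ (_ : n ≤ m), {w : PathSpace d | dotR (w m) l < c}) := by
    ext; simp [Fall]
  rw [this]
  exact MeasurableSet.iUnion fun n =>
    (measurableSet_le measurable_const (measurable_lev n l)).inter <|
    MeasurableSet.iUnion fun m => MeasurableSet.iUnion fun _ =>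
    measurableSet_lt (measurable_lev m l) measurable_const

variable (μ : Measure (EnvDist d)) [IsProbabilityMeasure μ]

lemma ann_Fall (l : Fin d → ℝ) (x : Site d) (K : ℝ) :
    ann μ x (Fall l (dotR x l) K) = ann μ 0 (Fall l 0 K) := by
  rw [ann_shift_zero μ x (measurableSet_Fall _ _ _)]
  congr 1
  ext w
  simp only [Fall, ssh, mem_preimage, mem_ofPred_eq, dotR_add, zero_add]
  refine exists_congr fun n => and_congr ?_ (exists_congr fun m => and_congr_right fun _ => ?_)
  · constructor <;> intro h <;> linarith
  · constructor <;> intro h <;> linarith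

/-- The event that the two paths meet at a site of level at least `c`. -/
def MeetAbove (l : Fin d → ℝ) (c : ℝ) : Set (PathSpace d × PathSpace d) :=
  {p | ∃ i j, p.1 i = p.2 j ∧ c ≤ dotR (p.1 i) l}

lemma measurableSet_MeetAbove (l : Fin d → ℝ) (c : ℝ) : MeasurableSet (MeetAbove l c) := by
  have : MeetAbove l c = ⋃ i, ⋃ j, ({p : PathSpace d × PathSpace d | p.1 i = p.2 j} ∩
      {p | c ≤ dotR (p.1 i) l}) := by
    ext; simp [MeetAbove]
  rw [this]
  exact MeasurableSet.iUnion fun i => MeasurableSet.iUnion fun j =>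
    (measurableSet_eq_site i j).inter
      (measurableSet_le measurable_const ((measurable_lev i l).comp measurable_fst))

/-- If the second walk tends to `-∞`, then the two walks are unlikely to meet far above the
starting point `x` of the first one: from a meeting point at which the quenched probability of
going below `x` is small, the second walk is unlikely to do so; and the first walk is unlikely to
reach points at which this quenched probability is not small. -/
lemma same_MeetAbove_le (l : Fin d → ℝ) (x y : Site d) (K : ℝ) {ε : ℝ≥0∞} (hε : ε ≠ 0)
    (hε' : ε ≠ ∞) :
    same μ x y (Prod.snd ⁻¹' (Aplus (-l)) ∩ MeetAbove l (dotR x l + K)) ≤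
      ε + ann μ 0 (Fall l 0 K) / ε := by
  set D : Set (PathSpace d) := {w | ∃ m, dotR (w m) l < dotR x l} with hDdef
  have hD : MeasurableSet D := by
    have : D = ⋃ m, {w : PathSpace d | dotR (w m) l < dotR x l} := by ext; simp [hDdef]
    rw [this]
    exact MeasurableSet.iUnion fun m => measurableSet_lt (measurable_lev m l) measurable_const
  have hq : ∀ ω : EnvOmega d, (Q ω x).prod (Q ω y)
      (Prod.snd ⁻¹' (Aplus (-l)) ∩ MeetAbove l (dotR x l + K)) ≤
      ε + Q ω x (Fall l (dotR x l) K) / ε := by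
    intro ω
    set S₁ : Set (Site d) := {z | dotR x l + K ≤ dotR z l ∧ Q ω z D ≤ ε}
    set S₂ : Set (Site d) := {z | dotR x l + K ≤ dotR z l ∧ ε ≤ Q ω z D}
    set U : Set (PathSpace d) := ⋃ n, FirstHit S₁ n ∩ tsh n ⁻¹' D
    set V : Set (PathSpace d) := ⋃ n, FirstHit S₂ n
    have hsub : Prod.snd ⁻¹' (Aplus (-l)) ∩ MeetAbove l (dotR x l + K) ⊆
        univ ×ˢ U ∪ V ×ˢ univ := by
      rintro ⟨w, v⟩ ⟨hv, i, j, hij, hlev⟩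
      simp only at hij hlev
      rcases le_total (Q ω (w i) D) ε with h | h
      · left
        obtain ⟨n, hn⟩ := exists_FirstHit (S := S₁) (w := v) ⟨j, hij ▸ ⟨hlev, h⟩⟩
        refine ⟨mem_univ _, mem_iUnion.2 ⟨n, hn, ?_⟩⟩
        have hv' : Tendsto (fun n => dotR (v n) (-l)) atTop atTop := hv
        obtain ⟨m, hm1, hm2⟩ := ((hv'.eventually_gt_atTop (-dotR x l)).and
          (eventually_ge_atTop n)).exists
        obtain ⟨k, rfl⟩ := Nat.exists_eq_add_of_le hm2
        refine ⟨k, ?_⟩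
        rw [dotR_neg] at hm1
        exact neg_lt_neg_iff.1 hm1
      · right
        obtain ⟨n, hn⟩ := exists_FirstHit (S := S₂) (w := w) ⟨i, ⟨hlev, h⟩⟩
        exact ⟨mem_iUnion.2 ⟨n, hn⟩, mem_univ _⟩
    have hFm : ∀ (S : Set (Site d)) n, MeasurableSet (FirstHit S n) :=
      fun S n => (detBy_FirstHit S n).measurableSet
    have hU : Q ω y U ≤ ε := by
      calc Q ω y U ≤ ∑' n, Q ω y (FirstHit S₁ n ∩ tsh n ⁻¹' D) := measure_iUnion_le _
        _ ≤ ∑' n, ε * Q ω y (FirstHit S₁ n) :=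
          ENNReal.tsum_le_tsum fun n => Q_FirstHit_le ω y S₁ hD (fun z hz => hz.2) n
        _ = ε * Q ω y (⋃ n, FirstHit S₁ n) := by
          rw [ENNReal.tsum_mul_left, measure_iUnion (disjoint_FirstHit S₁) (hFm S₁)]
        _ ≤ ε * 1 := by gcongr; exact prob_le_one
        _ = ε := mul_one _
    have hV : Q ω x V ≤ Q ω x (Fall l (dotR x l) K) / ε := by
      rw [ENNReal.le_div_iff_mul_le (Or.inl hε) (Or.inl hε'), mul_comm]
      calc ε * Q ω x V = ∑' n, ε * Q ω x (FirstHit S₂ n) := by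
            rw [ENNReal.tsum_mul_left, measure_iUnion (disjoint_FirstHit S₂) (hFm S₂)]
        _ ≤ ∑' n, Q ω x (FirstHit S₂ n ∩ tsh n ⁻¹' D) :=
          ENNReal.tsum_le_tsum fun n => le_Q_FirstHit ω x S₂ hD (fun z hz => hz.2) n
        _ = Q ω x (⋃ n, FirstHit S₂ n ∩ tsh n ⁻¹' D) := by
          rw [measure_iUnion (fun n m hnm => (disjoint_FirstHit S₂ hnm).mono
            inter_subset_left inter_subset_left)
            fun n => (hFm S₂ n).inter (measurable_tsh n hD)]
        _ ≤ Q ω x (Fall l (dotR x l) K) := by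
          refine measure_mono (iUnion_subset fun n => ?_)
          rintro w ⟨⟨hw, -⟩, k, hk⟩
          exact ⟨n, hw.1, n + k, by omega, hk⟩
    calc _ ≤ (Q ω x).prod (Q ω y) (univ ×ˢ U ∪ V ×ˢ univ) := measure_mono hsub
      _ ≤ (Q ω x).prod (Q ω y) (univ ×ˢ U) + (Q ω x).prod (Q ω y) (V ×ˢ univ) :=
        measure_union_le _ _
      _ = Q ω y U + Q ω x V := by simp [Measure.prod_prod]
      _ ≤ _ := add_le_add hU hV
  have hm : MeasurableSet (Prod.snd ⁻¹' (Aplus (-l)) ∩ MeetAbove l (dotR x l + K) :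
      Set (PathSpace d × PathSpace d)) :=
    (measurable_snd (measurableSet_Aplus _)).inter (measurableSet_MeetAbove _ _)
  rw [same_apply μ x y hm, ← ann_Fall μ l x K, ann_apply μ x (measurableSet_Fall _ _ _)]
  calc _ ≤ ∫⁻ ω, (ε + Q ω x (Fall l (dotR x l) K) / ε) ∂(nu μ) := lintegral_mono hq
    _ = _ := by
      rw [lintegral_add_left measurable_const]
      simp only [div_eq_mul_inv]
      rw [lintegral_mul_const _ (measurable_Q_apply x (measurableSet_Fall _ _ _))]
      simp

/-- The path either tends to `+∞` or has bounded level, so large falls are unlikely. -/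
lemma tendsto_Fall {l : Fin d → ℝ} (h : ann μ 0 (Splus l) ≠ 0) :
    Tendsto (fun K : ℕ => ann μ 0 (Fall l 0 K)) atTop (𝓝 0) := by
  have hanti : Antitone fun K : ℕ => Fall l 0 K := by
    rintro A B hAB w ⟨n, h1, h2⟩
    refine ⟨n, le_trans ?_ h1, h2⟩
    have : (A : ℝ) ≤ B := by exact_mod_cast hAB
    linarith
  have h0 : ann μ 0 (⋂ K : ℕ, Fall l 0 K) = 0 := by
    refine measure_eq_zero_iff_ae_notMem.2 ?_
    filter_upwards [Aplus_of_unbounded μ h] with w hw hwF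
    have hwF' := mem_iInter.1 hwF
    by_cases hb : w ∈ Bdd l
    · obtain ⟨M, hM⟩ := hb
      obtain ⟨K, hK⟩ := exists_nat_gt M
      obtain ⟨n, hn, -⟩ := hwF' K
      have := hM ⟨n, rfl⟩
      simp only at this
      linarith
    · have hA : Tendsto (fun n => dotR (w n) l) atTop atTop := hw hb
      obtain ⟨N, hN⟩ := (hA.eventually_ge_atTop 0).exists_forall_of_atTop
      obtain ⟨M, hM⟩ : BddAbove ((fun k => dotR (w k) l) '' (Iic N)) :=
        ((finite_Iic N).image _).bddAbove
      obtain ⟨K, hK⟩ := exists_nat_gt M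
      obtain ⟨n, hn, m, hm, hm'⟩ := hwF' K
      have hmN : m < N := by
        by_contra hcon
        exact absurd hm' (not_lt.2 (hN m (not_lt.1 hcon)))
      have := hM ⟨n, show n ≤ N by omega, rfl⟩
      simp only at this
      linarith
  rw [← h0]
  exact tendsto_measure_iInter_atTop
    (fun K => (measurableSet_Fall l 0 K).nullMeasurableSet) hanti ⟨0, measure_ne_top _ _⟩

/-- Transience in both directions with positive probability: two walks in the same environment
which start at distant levels and move away from each other are unlikely to meet. -/
lemma exists_same_Meet_le {l : Fin d → ℝ} (h1 : ann μ 0 (Aplus l) ≠ 0)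
    (h2 : ann μ 0 (Aplus (-l)) ≠ 0) {ε : ℝ≥0∞} (hε : ε ≠ 0) (hε' : ε ≠ ∞) :
    ∃ L₀ : ℝ, ∀ y : Site d, L₀ ≤ dotR y l →
      same μ 0 y (Aplus l ×ˢ Aplus (-l) ∩ Meet) ≤ 4 * ε := by
  have hpos : (0 : ℝ≥0∞) < ε * ε := ENNReal.mul_pos hε hε
  have t1 := (tendsto_Fall μ (Splus_pos_of_Aplus μ h1)).eventually (ge_mem_nhds hpos)
  have t2 := (tendsto_Fall μ (Splus_pos_of_Aplus μ h2)).eventually (ge_mem_nhds hpos)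
  obtain ⟨K, hK1, hK2⟩ := (t1.and t2).exists
  refine ⟨2 * K, fun y hy => ?_⟩
  have hsub : Aplus l ×ˢ Aplus (-l) ∩ (Meet : Set (PathSpace d × PathSpace d)) ⊆
      (Prod.snd ⁻¹' (Aplus (-l)) ∩ MeetAbove l (dotR 0 l + K)) ∪
      Prod.swap ⁻¹' (Prod.snd ⁻¹' (Aplus (- -l)) ∩ MeetAbove (-l) (dotR y (-l) + K)) := by
    rintro ⟨w, v⟩ ⟨⟨hw, hv⟩, i, j, hij⟩
    simp only at hij hw hv
    by_cases hc : dotR 0 l + K ≤ dotR (w i) l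
    · exact Or.inl ⟨hv, i, j, hij, hc⟩
    · refine Or.inr ⟨?_, j, i, hij.symm, ?_⟩
      · rw [neg_neg]; exact hw
      · show dotR y (-l) + K ≤ dotR (v j) (-l)
        rw [← hij, dotR_neg, dotR_neg]
        rw [dotR_zero] at hc
        linarith
  have hdiv : ∀ a : ℝ≥0∞, a ≤ ε * ε → a / ε ≤ ε := fun a ha =>
    ENNReal.div_le_of_le_mul ha
  have hm : MeasurableSet (Prod.snd ⁻¹' (Aplus (- -l)) ∩ MeetAbove (-l) (dotR y (-l) + K) :
      Set (PathSpace d × PathSpace d)) :=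
    (measurable_snd (measurableSet_Aplus _)).inter (measurableSet_MeetAbove _ _)
  calc _ ≤ _ := measure_mono hsub
    _ ≤ _ := measure_union_le _ _
    _ ≤ (ε + ann μ 0 (Fall l 0 K) / ε) + (ε + ann μ 0 (Fall (-l) 0 K) / ε) := by
      gcongr
      · exact same_MeetAbove_le μ l 0 y K hε hε'
      · rw [← same_swap μ y 0 hm]
        exact same_MeetAbove_le μ (-l) y 0 K hε hε'
    _ ≤ (ε + ε) + (ε + ε) := by
      gcongr
      · exact hdiv _ hK1
      · exact hdiv _ hK2
    _ = 4 * ε := by ring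

end

section

variable {d : ℕ}

/-! ### Asymptotic independence of two distant walks -/

/-- The first `n` steps of the path start at `x`, are nearest-neighbour steps, and do not lead
to levels below the level of `x`. -/
def Ahead (l : Fin d → ℝ) (x : Site d) (n : ℕ) : Set (PathSpace d) :=
  {w | w 0 = x ∧ (∀ k < n, ∃ s, w (k + 1) - w k = stepVec d s) ∧
    ∀ k ≤ n, dotR x l ≤ dotR (w k) l}

/-- The nearest-neighbour paths from `x` to `+∞` in the direction `l` which never go below the
level of `x`. -/
def Escape (l : Fin d → ℝ) (x : Site d) : Set (PathSpace d) := (⋂ n, Ahead l x n) ∩ Aplus l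

lemma detBy_Ahead (l : Fin d → ℝ) (x : Site d) (n : ℕ) : DetBy n (Ahead l x n) := by
  rintro w w' h ⟨h0, h1, h2⟩
  refine ⟨h 0 (Nat.zero_le _) ▸ h0, fun k hk => ?_, fun k hk => h k hk ▸ h2 k hk⟩
  rw [← h k hk.le, ← h (k + 1) hk]
  exact h1 k hk

lemma antitone_Ahead (l : Fin d → ℝ) (x : Site d) : Antitone (Ahead l x) := by
  rintro n m hnm w ⟨h0, h1, h2⟩
  exact ⟨h0, fun k hk => h1 k (hk.trans_le hnm), fun k hk => h2 k (hk.trans hnm)⟩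

lemma measurableSet_Ahead (l : Fin d → ℝ) (x : Site d) (n : ℕ) : MeasurableSet (Ahead l x n) :=
  (detBy_Ahead l x n).measurableSet

lemma measurableSet_Escape (l : Fin d → ℝ) (x : Site d) : MeasurableSet (Escape l x) :=
  (MeasurableSet.iInter fun n => measurableSet_Ahead l x n).inter (measurableSet_Aplus l)

lemma ssh_Ahead (l : Fin d → ℝ) (x : Site d) (n : ℕ) : ssh x ⁻¹' Ahead l x n = Ahead l 0 n := by
  ext w
  simp [Ahead, ssh, dotR_add, dotR_zero]

lemma ssh_Escape (l : Fin d → ℝ) (x : Site d) : ssh x ⁻¹' Escape l x = Escape l 0 := by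
  have h : ssh x ⁻¹' Aplus l = Aplus l := by
    ext w
    simp only [Aplus, ssh, mem_preimage, mem_ofPred_eq, dotR_add]
    refine ⟨fun h => ?_, fun h => tendsto_atTop_add_const_right _ _ h⟩
    simpa using tendsto_atTop_add_const_right _ (-dotR x l) h
  rw [Escape, Escape, preimage_inter, preimage_iInter, h]
  simp_rw [ssh_Ahead]

lemma abs_stepVec_le (s : Fin d × Bool) (i : Fin d) : |stepVec d s i| ≤ 1 := by
  unfold stepVec
  by_cases h : i = s.1
  · subst h; split_ifs <;> simp
  · split_ifs <;> simp [h]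

lemma Ahead.abs_le {l : Fin d → ℝ} {x : Site d} {n : ℕ} {w : PathSpace d} (h : w ∈ Ahead l x n)
    (i : Fin d) : ∀ k ≤ n, |w k i - x i| ≤ k := by
  intro k
  induction k with
  | zero => intro _; simp [h.1]
  | succ k ih =>
    intro hk
    obtain ⟨s, hs⟩ := h.2.1 k hk
    have h1 := ih (by omega)
    have h2 := abs_stepVec_le s i
    rw [← hs, Pi.sub_apply] at h2
    have h3 := abs_add_le (w (k + 1) i - w k i) (w k i - x i)
    rw [sub_add_sub_cancel] at h3
    push_cast
    linarith

lemma detBy_step (k : ℕ) :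
    DetBy (k + 1) {w : PathSpace d | ¬ ∃ s, w (k + 1) - w k = stepVec d s} := by
  intro w w' h hw
  show ¬ ∃ s, w' (k + 1) - w' k = stepVec d s
  rw [← h k (Nat.le_succ k), ← h (k + 1) le_rfl]
  exact hw

lemma detBy_start (x : Site d) : DetBy 0 {w : PathSpace d | w 0 ≠ x} := by
  intro w w' h hw
  show w' 0 ≠ x
  rw [← h 0 le_rfl]
  exact hw

lemma Q_step_null (ω : EnvOmega d) (x : Site d) (k : ℕ) :
    Q ω x {w | ¬ ∃ s, w (k + 1) - w k = stepVec d s} = 0 := by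
  rw [measure_eq_tsum_cyl _ (k + 1) (detBy_step k).measurableSet, ENNReal.tsum_eq_zero]
  intro f
  by_cases hf : extPath (k + 1) f ∈ {w : PathSpace d | ¬ ∃ s, w (k + 1) - w k = stepVec d s}
  · rw [(detBy_step k).inter_cyl hf, Q_cyl]
    refine mul_eq_zero_of_right _ (Finset.prod_eq_zero (Finset.self_mem_range_succ k) ?_)
    rw [ENNReal.ofReal_eq_zero]
    refine le_of_eq (not_not.1 fun hne => hf ?_)
    exact (ω (extPath (k + 1) f k)).support _ hne
  · rw [(detBy_step k).inter_cyl_eq_empty hf, measure_empty]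

lemma Q_start_null (ω : EnvOmega d) (x : Site d) : Q ω x {w | w 0 ≠ x} = 0 := by
  rw [measure_eq_tsum_cyl _ 0 (detBy_start x).measurableSet, ENNReal.tsum_eq_zero]
  intro f
  by_cases hf : extPath 0 f ∈ {w : PathSpace d | w 0 ≠ x}
  · rw [(detBy_start x).inter_cyl hf, Q_cyl, if_neg (show ¬ extPath 0 f 0 = x from hf), zero_mul]
  · rw [(detBy_start x).inter_cyl_eq_empty hf, measure_empty]

variable (μ : Measure (EnvDist d)) [IsProbabilityMeasure μ]

lemma ae_nearest (x : Site d) :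
    ∀ᵐ w ∂(ann μ x), w 0 = x ∧ ∀ k, ∃ s, w (k + 1) - w k = stepVec d s := by
  refine Eventually.and ?_ (ae_all_iff.2 fun k => ?_)
  · show ann μ x {w | w 0 ≠ x} = 0
    simp [ann_apply μ x (detBy_start x).measurableSet, Q_start_null]
  · show ann μ x {w | ¬ ∃ s, w (k + 1) - w k = stepVec d s} = 0
    rw [ann_apply μ x (detBy_step k).measurableSet]
    simp only [Q_step_null, lintegral_zero]

lemma ae_Ahead_iff (l : Fin d → ℝ) :
    ∀ᵐ w ∂(ann μ 0), w ∈ ⋂ n, Ahead l 0 n ↔ w ∈ Splus l := by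
  filter_upwards [ae_nearest μ 0] with w hw
  simp only [mem_iInter, Ahead, Splus, mem_ofPred_eq, dotR_zero]
  exact ⟨fun h n => (h n).2.2 n le_rfl, fun h n => ⟨hw.1, fun k _ => hw.2 k, fun k _ => h k⟩⟩

lemma ann_Ahead_inter {l : Fin d → ℝ} (h : ann μ 0 (Aplus l) ≠ 0) :
    ann μ 0 (⋂ n, Ahead l 0 n) = ann μ 0 (Escape l 0) := by
  refine measure_congr ?_
  filter_upwards [ae_Ahead_iff μ l, Aplus_of_Splus μ h] with w h1 h2
  exact propext ⟨fun hw => ⟨hw, h2 (h1.1 hw)⟩, fun hw => hw.1⟩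

lemma ann_Escape (l : Fin d → ℝ) (x : Site d) : ann μ x (Escape l x) = ann μ 0 (Escape l 0) := by
  rw [ann_shift_zero μ x (measurableSet_Escape l x), ssh_Escape]

lemma ann_Escape_ne_zero {l : Fin d → ℝ} (h : ann μ 0 (Aplus l) ≠ 0) :
    ann μ 0 (Escape l 0) ≠ 0 := by
  rw [← ann_Ahead_inter μ h, measure_congr (eventuallyEq_set.2 (ae_Ahead_iff μ l))]
  exact Splus_pos_of_Aplus μ h

/-- Up to a small error, the escape event is determined by finitely many steps. -/
lemma eventually_ann_Ahead_diff_le {l : Fin d → ℝ} (h : ann μ 0 (Aplus l) ≠ 0) {ε : ℝ≥0∞}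
    (hε : ε ≠ 0) :
    ∀ᶠ n in atTop, ∀ x, ann μ x (Ahead l x n \ Escape l x) ≤ ε := by
  have ht := tendsto_measure_iInter_atTop (μ := ann μ 0)
    (fun n => (measurableSet_Ahead l 0 n).nullMeasurableSet) (antitone_Ahead l 0)
    ⟨0, measure_ne_top _ _⟩
  rw [ann_Ahead_inter μ h] at ht
  have hlt : ann μ 0 (Escape l 0) < ann μ 0 (Escape l 0) + ε :=
    ENNReal.lt_add_right (measure_ne_top _ _) hε
  filter_upwards [ht.eventually (ge_mem_nhds hlt)] with n hn x
  rw [ann_shift_zero μ x ((measurableSet_Ahead l x n).diff (measurableSet_Escape l x)),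
    preimage_sdiff, ssh_Ahead, ssh_Escape,
    measure_sdiff (fun w hw => mem_iInter.1 hw.1 n) (measurableSet_Escape l 0).nullMeasurableSet
      (measure_ne_top _ _)]
  exact tsub_le_iff_left.2 hn

/-- Two walks in the same environment which start far apart escape in opposite directions with
at least nearly the product of the probabilities: up to a small error, the two events are
determined by disjoint parts of the environment. -/
lemma exists_mixing {l : Fin d → ℝ} (h1 : ann μ 0 (Aplus l) ≠ 0)
    (h2 : ann μ 0 (Aplus (-l)) ≠ 0) {ε : ℝ≥0∞} (hε : ε ≠ 0) :
    ∃ R : ℤ, ∀ y : Site d, (∃ i, R < |y i|) →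
      ann μ 0 (Escape l 0) * ann μ 0 (Escape (-l) 0) ≤
        same μ 0 y (Escape l 0 ×ˢ Escape (-l) y) + 2 * ε := by
  obtain ⟨n, hn1, hn2⟩ := ((eventually_ann_Ahead_diff_le μ h1 hε).and
    (eventually_ann_Ahead_diff_le μ h2 hε)).exists
  refine ⟨2 * n, ?_⟩
  rintro y ⟨i, hi⟩
  have hd1 := dependsOn_Q_finite (S := {z : Site d | |z i| ≤ n}) 0 n (measurableSet_Ahead l 0 n)
    (detBy_Ahead l 0 n) (fun w hw k hk => by
      have h := Ahead.abs_le hw i k hk.le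
      rw [Pi.zero_apply, sub_zero] at h
      exact h.trans (by exact_mod_cast hk.le))
  have hd2 := dependsOn_Q_finite (S := {z : Site d | |z i - y i| ≤ n}) y n
    (measurableSet_Ahead (-l) y n) (detBy_Ahead (-l) y n) (fun w hw k hk =>
      (Ahead.abs_le hw i k hk.le).trans (by exact_mod_cast hk.le))
  have hdisj : Disjoint {z : Site d | |z i| ≤ n} {z : Site d | |z i - y i| ≤ n} := by
    refine Set.disjoint_left.2 fun z hz1 hz2 => ?_
    simp only [mem_ofPred_eq] at hz1 hz2
    have := abs_sub_abs_le_abs_sub (y i) (z i)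
    rw [abs_sub_comm] at this
    omega
  have hmul := lintegral_mul_of_dependsOn μ (measurable_Q_apply 0 (measurableSet_Ahead l 0 n))
    (measurable_Q_apply y (measurableSet_Ahead (-l) y n)) hd1 hd2 hdisj
  rw [← same_prod μ 0 y (measurableSet_Ahead l 0 n) (measurableSet_Ahead (-l) y n),
    ← ann_apply μ 0 (measurableSet_Ahead l 0 n),
    ← ann_apply μ y (measurableSet_Ahead (-l) y n)] at hmul
  have hsub : Ahead l 0 n ×ˢ Ahead (-l) y n ⊆ Escape l 0 ×ˢ Escape (-l) y ∪
      (Prod.fst ⁻¹' (Ahead l 0 n \ Escape l 0) ∪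
        Prod.snd ⁻¹' (Ahead (-l) y n \ Escape (-l) y)) := by
    rintro ⟨w, v⟩ ⟨hw, hv⟩
    by_cases hw' : w ∈ Escape l 0
    · by_cases hv' : v ∈ Escape (-l) y
      · exact Or.inl ⟨hw', hv'⟩
      · exact Or.inr (Or.inr ⟨hv, hv'⟩)
    · exact Or.inr (Or.inl ⟨hw, hw'⟩)
  calc _ = ann μ 0 (Escape l 0) * ann μ y (Escape (-l) y) := by rw [ann_Escape μ (-l) y]
    _ ≤ ann μ 0 (Ahead l 0 n) * ann μ y (Ahead (-l) y n) := by
      gcongr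
      · exact fun w hw => mem_iInter.1 hw.1 n
      · exact fun w hw => mem_iInter.1 hw.1 n
    _ = same μ 0 y (Ahead l 0 n ×ˢ Ahead (-l) y n) := hmul.symm
    _ ≤ _ := measure_mono hsub
    _ ≤ same μ 0 y (Escape l 0 ×ˢ Escape (-l) y) +
        (same μ 0 y (Prod.fst ⁻¹' (Ahead l 0 n \ Escape l 0)) +
          same μ 0 y (Prod.snd ⁻¹' (Ahead (-l) y n \ Escape (-l) y))) :=
      (measure_union_le _ _).trans (by gcongr; exact measure_union_le _ _)
    _ ≤ same μ 0 y (Escape l 0 ×ˢ Escape (-l) y) + (ε + ε) := by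
      rw [same_fst μ 0 y ((measurableSet_Ahead l 0 n).diff (measurableSet_Escape l 0)),
        same_snd μ 0 y ((measurableSet_Ahead (-l) y n).diff (measurableSet_Escape (-l) y))]
      gcongr
      · exact hn1 0
      · exact hn2 y
    _ = _ := by rw [two_mul]

end

section

variable {d : ℕ}

/-! ### The planar crossing argument -/

lemma firstPt_aux (S : Set (Site d)) (w : PathSpace d) : ∃ n, w n ∈ S ∨ ∀ k, w k ∉ S := by
  by_cases h : ∃ n, w n ∈ S
  · exact h.imp fun n hn => Or.inl hn
  · exact ⟨0, Or.inr fun k hk => h ⟨k, hk⟩⟩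

/-- The first site of `S` visited by the path; the starting point if there is none. -/
noncomputable def firstPt (S : Set (Site d)) (w : PathSpace d) : Site d :=
  w (Nat.find (firstPt_aux S w))

lemma measurable_firstPt (S : Set (Site d)) : Measurable (firstPt S) := by
  have hS : ∀ n, MeasurableSet {w : PathSpace d | w n ∈ S} := fun n =>
    measurable_pi_apply n (MeasurableSet.of_discrete (s := S))
  have hp : ∀ n, MeasurableSet {w : PathSpace d | w n ∈ S ∨ ∀ k, w k ∉ S} := by
    intro n
    have : {w : PathSpace d | w n ∈ S ∨ ∀ k, w k ∉ S} =
        {w : PathSpace d | w n ∈ S} ∪ ⋂ k, {w : PathSpace d | w k ∈ S}ᶜ := by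
      ext; simp
    rw [this]
    exact (hS n).union (MeasurableSet.iInter fun k => (hS k).compl)
  exact Measurable.find (fun n => measurable_pi_apply n) hp (firstPt_aux S)

lemma firstPt_eq {S : Set (Site d)} {n : ℕ} {w : PathSpace d} (h : w ∈ FirstHit S n) :
    firstPt S w = w n := by
  unfold firstPt
  congr 1
  rw [Nat.find_eq_iff]
  refine ⟨Or.inl h.1, ?_⟩
  rintro k hk (h1 | h1)
  · exact h.2 k hk h1
  · exact h1 n h.1

/-- Existence of medians. -/
lemma exists_median {α : Type*} [MeasurableSpace α] (m : Measure α) [IsFiniteMeasure m]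
    {f : α → ℤ} (hf : Measurable f) :
    ∃ t : ℤ, m univ / 2 ≤ m {a | t ≤ f a} ∧ m univ / 2 ≤ m {a | f a ≤ t} := by
  by_cases h0 : m univ = 0
  · exact ⟨0, by simp [h0]⟩
  have hle : ∀ t : ℤ, MeasurableSet {a | f a ≤ t} := fun t => measurableSet_le hf measurable_const
  have hhalf : m univ / 2 < m univ := ENNReal.half_lt_self h0 (measure_ne_top _ _)
  have hpos : 0 < m univ / 2 := ENNReal.half_pos h0
  have hup : Tendsto (fun n : ℕ => m {a | f a ≤ n}) atTop (𝓝 (m univ)) := by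
    have := tendsto_measure_iUnion_atTop (μ := m) (s := fun n : ℕ => {a | f a ≤ (n : ℤ)})
      (fun n k hnk a (ha : f a ≤ n) => ha.trans (by exact_mod_cast hnk))
    rwa [show (⋃ n : ℕ, {a | f a ≤ (n : ℤ)}) = univ from
      eq_univ_of_forall fun a => mem_iUnion.2 ⟨(f a).toNat, Int.self_le_toNat _⟩] at this
  have hdown : Tendsto (fun n : ℕ => m {a | f a ≤ -(n : ℤ)}) atTop (𝓝 0) := by
    have := tendsto_measure_iInter_atTop (μ := m) (s := fun n : ℕ => {a | f a ≤ -(n : ℤ)})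
      (fun n => (hle _).nullMeasurableSet)
      (fun n k hnk a (ha : f a ≤ -(k : ℤ)) => ha.trans (by simpa using hnk))
      ⟨0, measure_ne_top _ _⟩
    rwa [show (⋂ n : ℕ, {a | f a ≤ -(n : ℤ)}) = ∅ from by
      refine eq_empty_of_forall_notMem fun a ha => ?_
      have h1 : f a ≤ -(((-f a).toNat + 1 : ℕ) : ℤ) := mem_iInter.1 ha ((-f a).toNat + 1)
      have h2 := Int.self_le_toNat (-f a)
      push_cast at h1
      omega, measure_empty] at this
  obtain ⟨A, hA⟩ := (hup.eventually (lt_mem_nhds hhalf)).exists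
  obtain ⟨B, hB⟩ := (hdown.eventually (gt_mem_nhds hpos)).exists
  obtain ⟨t, ht, hmin⟩ := Int.exists_least_of_bdd
    (P := fun t : ℤ => m univ / 2 ≤ m {a | f a ≤ t}) ⟨-(B : ℤ), fun z hz => by
      by_contra hcon
      refine absurd (hz.trans (measure_mono fun a (ha : f a ≤ z) => ?_)) (not_le.2 hB)
      exact ha.trans (le_of_lt (not_le.1 hcon))⟩ ⟨A, hA.le⟩
  refine ⟨t, ?_, ht⟩
  have hlt : m {a | f a ≤ t - 1} < m univ / 2 := by
    by_contra hcon
    have := hmin (t - 1) (not_lt.1 hcon)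
    omega
  by_contra hcon
  have hsum : m univ ≤ m {a | t ≤ f a} + m {a | f a ≤ t - 1} := by
    refine (measure_mono fun a _ => ?_).trans (measure_union_le _ _)
    rcases le_or_gt t (f a) with h | h
    · exact Or.inl h
    · exact Or.inr (show f a ≤ t - 1 by omega)
  have := ENNReal.add_lt_add (not_le.1 hcon) hlt
  rw [ENNReal.add_halves] at this
  exact absurd hsum (not_le.2 this)

lemma dotR_two {i j : Fin 2} (hij : i ≠ j) (z : Site 2) (l : Fin 2 → ℝ) :
    dotR z l = z i * l i + z j * l j := by
  unfold dotR
  rw [Fin.sum_univ_two]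
  fin_cases i <;> fin_cases j <;> simp_all [add_comm]

lemma isUnitVec_stepVec {i j : Fin 2} (hij : i ≠ j) (s : Fin 2 × Bool) :
    IsUnitVec (stepVec 2 s i) (stepVec 2 s j) := by
  obtain ⟨a, b⟩ := s
  fin_cases i <;> fin_cases j <;> fin_cases a <;> cases b <;>
    simp_all [stepVec, IsUnitVec]

lemma abs_dotR_step {i j : Fin 2} (hij : i ≠ j) {l : Fin 2 → ℝ} (hl : |l i| ≤ l j)
    (s : Fin 2 × Bool) : |dotR (stepVec 2 s) l| ≤ l j := by
  rw [dotR_two hij]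
  have hj : 0 ≤ l j := (abs_nonneg _).trans hl
  rcases isUnitVec_stepVec hij s with ⟨h1, h2 | h2⟩ | ⟨h1, h2 | h2⟩ <;>
    simp [h1, h2, hl, abs_of_nonneg hj]

lemma Escape.step {i j : Fin 2} (hij : i ≠ j) {l l' : Fin 2 → ℝ} (hl : |l i| ≤ l j) {x : Site 2}
    {w : PathSpace 2} (hw : w ∈ Escape l' x) (k : ℕ) :
    IsUnitVec (w (k + 1) i - w k i) (w (k + 1) j - w k j) ∧
      |dotR (w (k + 1)) l - dotR (w k) l| ≤ l j := by
  obtain ⟨s, hs⟩ := (mem_iInter.1 hw.1 (k + 1)).2.1 k (Nat.lt_succ_self k)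
  rw [← dotR_sub, hs, ← Pi.sub_apply, ← Pi.sub_apply, hs]
  exact ⟨isUnitVec_stepVec hij s, abs_dotR_step hij hl s⟩

/-- A path `w` going up from the origin and a path `v` going down from a site `y` on the level
`L` meet if the site where `v` first gets down to level `0` is on the wrong side of the origin,
given the side of `y` on which `w` first gets up to level `L`. -/
lemma mem_Meet_of_crossing {i j : Fin 2} (hij : i ≠ j) {l : Fin 2 → ℝ} (hl : |l i| ≤ l j)
    (hlj : 0 < l j) {L : ℝ} (hL : 0 < L) {y : Site 2} (hy : L ≤ dotR y l)
    (hy' : dotR y l < L + l j) {w v : PathSpace 2} (hw : w ∈ Escape l 0)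
    (hv : v ∈ Escape (-l) y)
    (h : (y i ≤ firstPt {z | L ≤ dotR z l} w i ∧ 0 < firstPt {z | dotR z l ≤ 0} v i) ∨
      (firstPt {z | L ≤ dotR z l} w i ≤ y i ∧ firstPt {z | dotR z l ≤ 0} v i ≤ 0)) :
    (w, v) ∈ Meet := by
  by_contra hmeet
  have hne : ∀ a b, w a ≠ v b := fun a b hab => hmeet ⟨a, b, hab⟩
  have hw0 : w 0 = 0 := (mem_iInter.1 hw.1 0).1
  have hv0 : v 0 = y := (mem_iInter.1 hv.1 0).1
  have hwpos : ∀ k, 0 ≤ dotR (w k) l := fun k => by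
    have := (mem_iInter.1 hw.1 k).2.2 k le_rfl
    rwa [dotR_zero] at this
  have hvle : ∀ k, dotR (v k) l ≤ dotR y l := fun k => by
    have := (mem_iInter.1 hv.1 k).2.2 k le_rfl
    rw [dotR_neg, dotR_neg] at this
    linarith
  have hwA : Tendsto (fun n => dotR (w n) l) atTop atTop := hw.2
  have hvA : Tendsto (fun n => dotR (v n) (-l)) atTop atTop := hv.2
  obtain ⟨m, hm⟩ := exists_FirstHit (S := {z | L ≤ dotR z l}) (w := w)
    (hwA.eventually_ge_atTop L).exists
  obtain ⟨n, hn⟩ := exists_FirstHit (S := {z | dotR z l ≤ 0}) (w := v) (by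
    obtain ⟨k, hk⟩ := (hvA.eventually_ge_atTop 0).exists
    rw [dotR_neg] at hk
    exact ⟨k, by show dotR (v k) l ≤ 0; linarith⟩)
  rw [firstPt_eq hm, firstPt_eq hn] at h
  have hm1 : ∀ k < m, dotR (w k) l < L := fun k hk => not_le.1 (hm.2 k hk)
  have hn1 : ∀ k < n, 0 < dotR (v k) l := fun k hk => not_le.1 (hn.2 k hk)
  have hwlt : ∀ k ≤ m, dotR (w k) l < L + l j := by
    intro k hk
    rcases hk.lt_or_eq with hk | rfl
    · linarith [hm1 k hk]
    · cases k with
      | zero => rw [hw0, dotR_zero]; linarith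
      | succ k =>
        have h1 := (abs_le.1 (Escape.step hij hl hw k).2).2
        linarith [hm1 k (Nat.lt_succ_self k)]
  have hvgt : ∀ k ≤ n, -l j < dotR (v k) l := by
    intro k hk
    rcases hk.lt_or_eq with hk | rfl
    · linarith [hn1 k hk]
    · cases k with
      | zero => rw [hv0]; linarith
      | succ k =>
        have h1 := (abs_le.1 (Escape.step hij hl hv k).2).1
        linarith [hn1 k (Nat.lt_succ_self k)]
  have ext2 : ∀ {a b : Site 2}, a i = b i → a j = b j → a = b := by
    intro a b hi hj
    ext k
    have : k = i ∨ k = j := by omega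
    rcases this with rfl | rfl <;> assumption
  have key : y i ≤ w m i ↔ v n i ≤ 0 := by
    have := crossing_paths (xu := fun k => w k i) (xv := fun k => w k j) (yu := fun k => v k i)
      (yv := fun k => v k j) (m := m) (n := n) (α := l i) (β := l j) (L := L) hlj
      (fun k _ => (Escape.step hij hl hw k).1) (fun k _ => (Escape.step hij hl hv k).1)
      (by simp [hw0]) (by simp [hw0]) (fun a _ b _ hab => hne a b (ext2 hab.1 hab.2))
      (fun k _ => by rw [← dotR_two hij]; exact hwpos k)
      (fun k hk => by rw [← dotR_two hij]; exact hwlt k hk)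
      (by rw [← dotR_two hij]; exact hm.1)
      (fun k hk => by rw [← dotR_two hij]; exact hvgt k hk)
      (fun k _ => by rw [← dotR_two hij]; exact (hvle k).trans_lt hy')
      (by rw [← dotR_two hij, hv0]; exact hy)
      (by rw [← dotR_two hij]; exact hn.1)
    simpa only [hv0] using this
  rcases h with ⟨h1, h2⟩ | ⟨h1, h2⟩
  · exact absurd (key.1 h1) (not_le.2 h2)
  · -- here `w m` and `y` lie on the same vertical line and on the same level
    have hi : w m i = y i := le_antisymm h1 (key.2 h2)
    have hmL : L ≤ dotR (w m) l := hm.1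
    have hmL' := hwlt m le_rfl
    rw [dotR_two hij] at hmL hmL' hy hy'
    rw [hi] at hmL hmL'
    have e1 : ((w m j : ℝ) - y j) * l j < 1 * l j := by linarith
    have e2 : ((y j : ℝ) - w m j) * l j < 1 * l j := by linarith
    have e1' := lt_of_mul_lt_mul_right e1 hlj.le
    have e2' := lt_of_mul_lt_mul_right e2 hlj.le
    have e1'' : w m j - y j < 1 := by exact_mod_cast e1'
    have e2'' : y j - w m j < 1 := by exact_mod_cast e2'
    exact hne m 0 (hv0 ▸ ext2 hi (by omega))

lemma exists_site {i j : Fin 2} (hij : i ≠ j) {l : Fin 2 → ℝ} (hlj : 0 < l j) (L : ℝ) (t : ℤ) :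
    ∃ y : Site 2, y i = t ∧ L ≤ dotR y l ∧ dotR y l < L + l j := by
  set c : ℤ := ⌈(L - t * l i) / l j⌉ with hc
  have h1 : (L - t * l i) / l j ≤ c := Int.le_ceil _
  have h2 : (c : ℝ) < (L - t * l i) / l j + 1 := Int.ceil_lt_add_one _
  rw [div_le_iff₀ hlj] at h1
  rw [← sub_lt_iff_lt_add, lt_div_iff₀ hlj] at h2
  refine ⟨fun k => if k = i then t else c, by simp, ?_, ?_⟩ <;>
  · rw [dotR_two hij]
    simp only [if_true, if_neg hij.symm]
    linarith

variable (μ : Measure (EnvDist 2)) [IsProbabilityMeasure μ]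

/-- Two independent walks which escape in opposite directions meet with conditional probability
at least `1 / 2`, if the starting point of the second one is a median of the place where the first
one arrives. -/
lemma exists_indep_Meet_ge {i j : Fin 2} (hij : i ≠ j) {l : Fin 2 → ℝ} (hl : |l i| ≤ l j)
    (hlj : 0 < l j) {L : ℝ} (hL : 0 < L) :
    ∃ y : Site 2, L ≤ dotR y l ∧
      ann μ 0 (Escape l 0) * ann μ 0 (Escape (-l) 0) / 2 ≤
        ((ann μ 0).prod (ann μ y)) (Escape l 0 ×ˢ Escape (-l) y ∩ Meet) := by
  set f : PathSpace 2 → ℤ := fun w => firstPt {z | L ≤ dotR z l} w i with hf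
  set g : PathSpace 2 → ℤ := fun v => firstPt {z | dotR z l ≤ 0} v i with hg
  have hfm : Measurable f := (measurable_pi_apply i).comp (measurable_firstPt _)
  have hgm : Measurable g := (measurable_pi_apply i).comp (measurable_firstPt _)
  obtain ⟨t, ht1, ht2⟩ := exists_median ((ann μ 0).restrict (Escape l 0)) hfm
  have m1 : MeasurableSet {w | t ≤ f w} := measurableSet_le measurable_const hfm
  have m2 : MeasurableSet {w | f w ≤ t} := measurableSet_le hfm measurable_const
  have m3 : MeasurableSet {v | g v ≤ 0} := measurableSet_le hgm measurable_const
  rw [Measure.restrict_apply m1, Measure.restrict_apply_univ] at ht1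
  rw [Measure.restrict_apply m2, Measure.restrict_apply_univ] at ht2
  obtain ⟨y, rfl, hy, hy'⟩ := exists_site hij hlj L t
  refine ⟨y, hy, ?_⟩
  set E := Escape (-l) y with hE
  have hEm : MeasurableSet E := measurableSet_Escape _ _
  set R₁ := ({w | y i ≤ f w} ∩ Escape l 0) ×ˢ (E \ {v | g v ≤ 0})
  set R₂ := ({w | f w ≤ y i} ∩ Escape l 0) ×ˢ (E ∩ {v | g v ≤ 0})
  have hdisj : Disjoint R₁ R₂ := by
    refine Set.disjoint_left.2 ?_
    rintro ⟨w, v⟩ ⟨-, h1⟩ ⟨-, h2⟩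
    exact h1.2 h2.2
  have hR₂ : MeasurableSet R₂ := (m2.inter (measurableSet_Escape _ _)).prod (hEm.inter m3)
  have hsub : R₁ ∪ R₂ ⊆ Escape l 0 ×ˢ E ∩ Meet := by
    rintro ⟨w, v⟩ (⟨h1, h2⟩ | ⟨h1, h2⟩)
    · exact ⟨⟨h1.2, h2.1⟩, mem_Meet_of_crossing hij hl hlj hL hy hy' h1.2 h2.1
        (Or.inl ⟨h1.1, not_le.1 h2.2⟩)⟩
    · exact ⟨⟨h1.2, h2.1⟩, mem_Meet_of_crossing hij hl hlj hL hy hy' h1.2 h2.1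
        (Or.inr ⟨h1.1, h2.2⟩)⟩
  calc ann μ 0 (Escape l 0) * ann μ 0 (Escape (-l) 0) / 2
      = ann μ 0 (Escape l 0) / 2 * ann μ y E := by
        rw [hE, ann_Escape μ (-l) y]
        simp only [div_eq_mul_inv]
        ring
    _ = ann μ 0 (Escape l 0) / 2 * ann μ y (E \ {v | g v ≤ 0}) +
        ann μ 0 (Escape l 0) / 2 * ann μ y (E ∩ {v | g v ≤ 0}) := by
        rw [← mul_add, add_comm, measure_inter_add_sdiff _ m3]
    _ ≤ ((ann μ 0).prod (ann μ y)) R₁ + ((ann μ 0).prod (ann μ y)) R₂ := by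
        rw [Measure.prod_prod, Measure.prod_prod]
        gcongr
    _ = ((ann μ 0).prod (ann μ y)) (R₁ ∪ R₂) := (measure_union hdisj hR₂).symm
    _ ≤ _ := measure_mono hsub

/-- The case of a direction which is closest to the positive `j`-axis, where the probability `p` that
both walks escape, the mixing estimate and the two estimates of the meeting probability lead to
`p / 2 ≤ 6 ε` with `ε = p / 16`. -/
lemma not_both_aux {i j : Fin 2} (hij : i ≠ j) {l : Fin 2 → ℝ} (hl : |l i| ≤ l j)
    (hlj : 0 < l j) : ¬ (ann μ 0 (Aplus l) ≠ 0 ∧ ann μ 0 (Aplus (-l)) ≠ 0) := by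
  rintro ⟨h1, h2⟩
  set p := ann μ 0 (Escape l 0) * ann μ 0 (Escape (-l) 0) with hp
  have hp0 : p ≠ 0 := mul_ne_zero (ann_Escape_ne_zero μ h1) (ann_Escape_ne_zero μ h2)
  have hpt : p ≠ ∞ := ENNReal.mul_ne_top (measure_ne_top _ _) (measure_ne_top _ _)
  obtain ⟨ε, hε⟩ : ∃ ε, ε = p / 16 := ⟨_, rfl⟩
  have hε0 : ε ≠ 0 := by rw [hε]; exact ENNReal.div_ne_zero.2 ⟨hp0, by norm_num⟩
  have hεt : ε ≠ ∞ := by rw [hε]; exact ENNReal.div_ne_top hpt (by norm_num)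
  have hpε : p = 16 * ε := by
    rw [hε, ENNReal.mul_div_cancel (by norm_num) (by norm_num)]
  obtain ⟨L₀, hL₀⟩ := exists_same_Meet_le μ h1 h2 hε0 hεt
  obtain ⟨R, hR⟩ := exists_mixing μ h1 h2 hε0
  obtain ⟨y, hy, hhalf⟩ := exists_indep_Meet_ge μ hij hl hlj
    (L := max L₀ (max 1 (2 * R * l j + 1))) (by positivity)
  have hy1 : L₀ ≤ dotR y l := (le_max_left _ _).trans hy
  have hy2 : 2 * R * l j + 1 ≤ dotR y l :=
    (le_max_right _ _).trans ((le_max_right _ _).trans hy)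
  have hfar : ∃ k, R < |y k| := by
    by_contra! hcon
    have a1 : |(y i : ℝ)| ≤ R := by exact_mod_cast hcon i
    have a2 : |(y j : ℝ)| ≤ R := by exact_mod_cast hcon j
    have hR0 : (0 : ℝ) ≤ R := (abs_nonneg _).trans a1
    rw [dotR_two hij] at hy2
    have b1 : (y i : ℝ) * l i ≤ R * l j := (le_abs_self _).trans (by rw [abs_mul]; gcongr)
    have b2 : (y j : ℝ) * l j ≤ R * l j := by
      exact mul_le_mul_of_nonneg_right ((le_abs_self _).trans a2) hlj.le
    linarith
  have hmix := hR y hfar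
  set C := Escape l 0 ×ˢ Escape (-l) y with hC
  have hCm : MeasurableSet C := (measurableSet_Escape _ _).prod (measurableSet_Escape _ _)
  set I := (ann μ 0).prod (ann μ y) with hI
  have hIC : I (C ∩ Meet) + I (C ∩ Meetᶜ) = p := by
    rw [← Set.sdiff_eq, measure_inter_add_sdiff _ measurableSet_Meet, hI, hC, Measure.prod_prod,
      ann_Escape μ (-l) y]
  have hle : p ≤ 6 * ε + I (C ∩ Meetᶜ) := by
    calc p ≤ same μ 0 y C + 2 * ε := hmix
      _ = same μ 0 y (C ∩ Meet) + same μ 0 y (C ∩ Meetᶜ) + 2 * ε := by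
        rw [← Set.sdiff_eq, measure_inter_add_sdiff _ measurableSet_Meet]
      _ ≤ 4 * ε + I (C ∩ Meetᶜ) + 2 * ε := by
        rw [same_eq_indep μ 0 y hCm]
        gcongr
        refine (measure_mono ?_).trans (hL₀ y hy1)
        rintro ⟨w, v⟩ ⟨⟨hw, hv⟩, hm⟩
        exact ⟨⟨hw.2, hv.2⟩, hm⟩
      _ = _ := by ring
  rw [← hIC] at hle
  have h6 : I (C ∩ Meet) ≤ 6 * ε := (ENNReal.add_le_add_iff_right (measure_ne_top _ _)).1 hle
  have h8 : p / 2 = 8 * ε := by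
    rw [hpε, show (16 : ℝ≥0∞) * ε = (8 * ε) * 2 by ring]
    exact ENNReal.mul_div_cancel_right (by norm_num) (by norm_num)
  have h86 : 8 * ε ≤ 6 * ε := h8 ▸ hhalf.trans h6
  exact absurd ((ENNReal.mul_le_mul_iff_left hε0 hεt).1 h86) (by norm_num)

/-- In the plane, the walk cannot be transient in both of two opposite directions with positive
probability. -/
lemma not_both {l : Fin 2 → ℝ} (hl : l ≠ 0) :
    ¬ (ann μ 0 (Aplus l) ≠ 0 ∧ ann μ 0 (Aplus (-l)) ≠ 0) := by
  obtain ⟨i, j, hij, hle⟩ : ∃ i j : Fin 2, i ≠ j ∧ |l i| ≤ |l j| := by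
    rcases le_total |l 0| |l 1| with h | h
    · exact ⟨0, 1, by decide, h⟩
    · exact ⟨1, 0, by decide, h⟩
  have hj : l j ≠ 0 := by
    intro hj
    refine hl (funext fun k => ?_)
    have : k = i ∨ k = j := by omega
    rcases this with rfl | rfl
    · rw [hj, abs_zero] at hle
      exact abs_nonpos_iff.1 hle
    · exact hj
  rcases lt_or_gt_of_ne hj with h | h
  · intro hb
    refine not_both_aux μ hij (l := -l) ?_ (by simpa using h)
      ⟨hb.2, by rw [neg_neg]; exact hb.1⟩
    simpa [abs_of_neg h] using hle
  · refine not_both_aux μ hij ?_ h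
    rwa [abs_of_pos h] at hle

end

/-- in dimension 2, `P(A_+(ℓ))` is 0 or 1. -/
theorem stmt3 (μ : Measure (EnvDist 2)) (P : Measure (RWSpace 2)) (hP : IsRWRE μ P)
    (l : Fin 2 → ℝ) (hl : l ≠ 0) :
    P {q : RWSpace 2 | Tendsto (fun n => dotR (q.2 n) l) atTop atTop} = 0 ∨
    P {q : RWSpace 2 | Tendsto (fun n => dotR (q.2 n) l) atTop atTop} = 1 := by
  have := hP.2.1.1
  have h : P {q : RWSpace 2 | Tendsto (fun n => dotR (q.2 n) l) atTop atTop} =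
      ann μ 0 (Aplus l) := by
    rw [← IsRWRE.map_snd hP, Measure.map_apply measurable_snd (measurableSet_Aplus l)]
    rfl
  rw [h]
  exact zero_one_of_not_both μ (not_both μ hl)
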